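/- In the setting of the previous statement (Assumption 1 of the paper: densities p(θ,x,y) with p(θ₀,·,·) ≡ 1 differentiable at θ₀, ψ-irreducibility, minorization on a set K, drift condition ∫V dP(θ)(x,·) ≤ λV(x) + b·1_K(x) with λ ∈ (0,1), V-operator-norm differentiability at θ₀, sup_x g_{ii}(x)/V(x) < ∞, sup_x |f(x)|/√(V(x)) < ∞, invariant probability π for P(θ₀) with ∫V dπ < ∞, initial distribution μ with ∫V dμ < ∞), let additionally f̂ : X → ℝ be measurable with |f̂(x)| ≤ c·√(V(x)) and f̂ − P(θ₀)f̂ = f − α(θ₀) pointwise, where α(θ₀) = ∫f dπ. Define g_{0i}(x) = g_{i0}(x) = ∫ f̂(y)·∂_i p(θ₀,x,y) P(θ₀,x,dy) for 1 ≤ i ≤ d, g_{00}(x) = ∫ f̂(y)² P(θ₀,x,dy) − (∫ f̂(y) P(θ₀,x,dy))², and let Σ ∈ ℝ^{(d+1)×(d+1)} have entries Σ_{ij} = ∫ g_{ij} dπ for 0 ≤ i,j ≤ d. Then the laws of the ℝ^d-valued random vectors (α_n − α(θ₀))·M_n converge weakly, as n → ∞, to the pushforward of the centered multivariate Gaussian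 distribution on ℝ^{d+1} with covariance Σ under the map z = (z₀, z₁, …, z_d) ↦ z₀·(z₁, …, z_d). -/

import Mathlib

open MeasureTheory ProbabilityTheory Filter
open scoped ENNReal NNReal Topology

noncomputable section

/-- The `k`-step transition kernel `P^k`. -/
def kpow {X : Type*} [MeasurableSpace X] (P : Kernel X X) : ℕ → Kernel X X
  | 0 => Kernel.id
  | k + 1 => P ∘ₖ kpow P k

/-- `Pμ` is the law on path space of the Markov chain with initial distribution `μ`
and one-step transition kernel `P`. -/
def IsMarkovChainLaw {X : Type*} [MeasurableSpace X] (μ : Measure X) (P : Kernel X X)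
    (Pμ : Measure (ℕ → X)) : Prop :=
  IsProbabilityMeasure Pμ ∧
  Pμ.map (fun ω => ω 0) = μ ∧
  ∀ (n : ℕ) (g : (Fin (n + 1) → X) → ℝ≥0∞) (h : X → ℝ≥0∞),
    Measurable g → Measurable h →
    ∫⁻ ω, g (fun i => ω i) * h (ω (n + 1)) ∂Pμ
      = ∫⁻ ω, g (fun i => ω i) * ∫⁻ y, h y ∂(P (ω n)) ∂Pμ


theorem hm_contract {X : Type*} [MeasurableSpace X] (κ : X → Measure X)
    [∀ x, IsProbabilityMeasure (κ x)] (V : X → ℝ) (hV0 : ∀ x, 0 ≤ V x)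
    (hVi : ∀ x, Integrable V (κ x)) (γ B r : ℝ) (hγ0 : 0 ≤ γ) (hγ : γ < 1) (hB : 0 ≤ B)
    (hr : 2 * B + γ * r < r) (ν : Measure X) [IsFiniteMeasure ν] (hν : 0 < ν.real Set.univ)
    (hdr : ∀ x, ∫ y, V y ∂(κ x) ≤ γ * V x + B)
    (hmin : ∀ x, V x ≤ r → ν ≤ κ x) :
    ∃ β > 0, ∃ ρ, 0 ≤ ρ ∧ ρ < 1 ∧ ∀ φ : X → ℝ, Measurable φ → ∀ L, 0 ≤ L →
      (∀ x y, |φ x - φ y| ≤ L * (2 + β * V x + β * V y)) →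
      ∀ x y, |∫ z, φ z ∂(κ x) - ∫ z, φ z ∂(κ y)| ≤ ρ * L * (2 + β * V x + β * V y) := by
  set η := ν.real Set.univ with hη
  have hr0 : 0 ≤ r := by nlinarith
  set β := η / (2 * (B + 1)) with hβ
  have hβ0 : 0 < β := by positivity
  have hβB : 2 * β * B ≤ η := by
    have : β * (2 * (B + 1)) = η := by rw [hβ]; field_simp
    nlinarith
  set a := r - γ * r - 2 * B with ha
  have ha0 : 0 < a := by rw [ha]; linarith
  set τ := min (η / 2) (min (1 - γ) (β * a / (2 + β * r))) with hτ
  have h1 : τ ≤ η / 2 := min_le_left _ _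
  have h2 : τ ≤ 1 - γ := (min_le_right _ _).trans (min_le_left _ _)
  have h3 : τ ≤ β * a / (2 + β * r) := (min_le_right _ _).trans (min_le_right _ _)
  have h3' : τ * (2 + β * r) ≤ β * a := by rwa [le_div_iff₀ (by positivity)] at h3
  have hτ0 : 0 < τ := by
    refine lt_min (by positivity) (lt_min (by linarith) (by positivity))
  refine ⟨β, hβ0, 1 - τ, by linarith, by linarith, ?_⟩
  intro φ hφ L hL hosc x y
  obtain ⟨c, hc⟩ : ∃ c : ℝ, ∀ z, |φ z - c| ≤ L * (1 + β * V z) := by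
    have := exists_between_of_forall_le (s := Set.range fun z => φ z - L * (1 + β * V z))
      (t := Set.range fun z => φ z + L * (1 + β * V z)) ⟨_, x, rfl⟩ ⟨_, x, rfl⟩ (by
        rintro _ ⟨u, rfl⟩ _ ⟨w, rfl⟩
        have := (abs_le.1 (hosc u w)).2
        simp only
        nlinarith)
    obtain ⟨c, hc1, hc2⟩ := this
    refine ⟨c, fun z => abs_le.2 ⟨?_, ?_⟩⟩
    · have := hc2 ⟨z, rfl⟩
      simp only at this; linarith
    · have := hc1 ⟨z, rfl⟩
      simp only at this; linarith
  set W : X → ℝ := fun z => L * (1 + β * V z) with hW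
  have hWi : ∀ x, Integrable W (κ x) := fun x =>
    ((integrable_const 1).add ((hVi x).const_mul β)).const_mul L
  have hψi : ∀ x, Integrable (fun z => φ z - c) (κ x) := fun x =>
    Integrable.mono' (hWi x) (hφ.sub_const c).aestronglyMeasurable (ae_of_all _ hc)
  have hφi : ∀ x, Integrable φ (κ x) := fun x => by
    exact ((hψi x).add (integrable_const c)).congr (ae_of_all _ fun z => by simp)
  have hsub : ∀ x, ∫ z, (φ z - c) ∂(κ x) = ∫ z, φ z ∂(κ x) - c := fun x => by
    rw [integral_sub (hφi x) (integrable_const c)]; simp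
  have hWint : ∀ x, ∫ z, W z ∂(κ x) ≤ L * (1 + β * (γ * V x + B)) := fun x => by
    rw [hW, integral_const_mul, integral_add (integrable_const 1) ((hVi x).const_mul β),
      integral_const_mul]
    simp only [integral_const, probReal_univ, smul_eq_mul, mul_one]
    gcongr
    exact hdr x
  have hψW : ∀ x, |∫ z, (φ z - c) ∂(κ x)| ≤ L * (1 + β * (γ * V x + B)) := fun x =>
    (abs_integral_le_integral_abs.trans (integral_mono (hψi x).abs (hWi x) hc)).trans (hWint x)
  have hdiff : ∫ z, φ z ∂(κ x) - ∫ z, φ z ∂(κ y)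
      = ∫ z, (φ z - c) ∂(κ x) - ∫ z, (φ z - c) ∂(κ y) := by rw [hsub, hsub]; ring
  have hVx := hV0 x
  have hVy := hV0 y
  by_cases hs : r ≤ V x + V y
  · have key : 2 + β * (γ * (V x + V y)) + 2 * β * B ≤ (1 - τ) * (2 + β * V x + β * V y) := by
      have : 0 ≤ β * (1 - γ - τ) * (V x + V y - r) :=
        mul_nonneg (mul_nonneg hβ0.le (by linarith)) (by linarith)
      have e : β * a = β * (r - γ * r - 2 * B) := rfl
      nlinarith
    have h4 := abs_sub (∫ z, (φ z - c) ∂(κ x)) (∫ z, (φ z - c) ∂(κ y))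
    rw [hdiff]
    have := hψW x
    have := hψW y
    have := mul_le_mul_of_nonneg_left key hL
    calc _ ≤ _ := h4
      _ ≤ L * (1 + β * (γ * V x + B)) + L * (1 + β * (γ * V y + B)) := by gcongr
      _ ≤ _ := by linarith
  · push Not at hs
    have hdec : ∀ x, V x ≤ r → |∫ z, (φ z - c) ∂(κ x) - ∫ z, (φ z - c) ∂ν|
        ≤ L * (1 + β * (γ * V x + B)) - L * η := by
      intro x hx
      have hle := hmin x hx
      obtain ⟨ρ', hρ'⟩ : ∃ ρ' : Measure X, κ x = ρ' + ν :=
        ⟨κ x - ν, (Measure.sub_add_cancel_of_le hle).symm⟩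
      have hρle : ρ' ≤ κ x := by rw [hρ']; exact Measure.le_add_right le_rfl
      have i1 := (hψi x).mono_measure hle
      have i2 := (hψi x).mono_measure hρle
      have i3 := (hWi x).mono_measure hle
      have i4 := (hWi x).mono_measure hρle
      have e1 : ∫ z, (φ z - c) ∂(κ x) - ∫ z, (φ z - c) ∂ν = ∫ z, (φ z - c) ∂ρ' := by
        rw [hρ', integral_add_measure i2 i1]; ring
      have e2 : ∫ z, W z ∂(κ x) = ∫ z, W z ∂ρ' + ∫ z, W z ∂ν := by
        conv_lhs => rw [hρ']
        rw [integral_add_measure i4 i3]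
      have e3 : L * η ≤ ∫ z, W z ∂ν := by
        have : ∫ z, L ∂ν ≤ ∫ z, W z ∂ν := integral_mono (integrable_const _) i3 (fun z => by
          have := hV0 z
          have : 0 ≤ L * (β * V z) := by positivity
          simp only [hW]; linarith)
        simpa [mul_comm, hη] using this
      rw [e1]
      have := abs_integral_le_integral_abs.trans (integral_mono i2.abs i4 hc)
      have := hWint x
      linarith
    have h5 := hdec x (by linarith)
    have h6 := hdec y (by linarith)
    rw [hdiff]
    have key : 2 - 2 * η + β * (γ * (V x + V y)) + 2 * β * B
        ≤ (1 - τ) * (2 + β * V x + β * V y) := by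
      have : 0 ≤ β * (1 - γ - τ) * (V x + V y) :=
        mul_nonneg (mul_nonneg hβ0.le (by linarith)) (by linarith)
      nlinarith
    have := mul_le_mul_of_nonneg_left key hL
    rw [abs_le] at *
    constructor <;> linarith

set_option linter.unusedSectionVars false
set_option linter.unusedVariables false

/-- Measurable and dominated by a multiple of `V`. -/
def VB {X : Type*} [MeasurableSpace X] (V : X → ℝ) (u : X → ℝ) : Prop :=
  Measurable u ∧ ∃ C, 0 ≤ C ∧ ∀ x, |u x| ≤ C * V x

/-- The transition operator. -/
def TT {X : Type*} [MeasurableSpace X] (P : Kernel X X) (u : X → ℝ) : X → ℝ :=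
  fun x => ∫ y, u y ∂(P x)

/-- The drift data. -/
structure DC {X : Type*} [MeasurableSpace X] (P : Kernel X X) (V : X → ℝ) (K : Set X)
    (l b : ℝ) : Prop where
  Vmeas : Measurable V
  V1 : ∀ x, 1 ≤ V x
  l0 : 0 < l
  l1 : l < 1
  b0 : 0 < b
  Kmeas : MeasurableSet K
  int : ∀ x, Integrable V (P x)
  drift : ∀ x, ∫ y, V y ∂(P x) ≤ l * V x + b * K.indicator (fun _ => 1) x

set_option linter.unusedSectionVars false

section ergodic

variable {X : Type*} [MeasurableSpace X] {P : Kernel X X} [IsMarkovKernel P] {V : X → ℝ}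
  {K : Set X} {l b : ℝ}

theorem integral_bind_kernel {Y : Type*} [MeasurableSpace Y] {μ : Measure Y} {P : Kernel Y X}
    {u : X → ℝ} (hu : Integrable u (μ.bind P)) :
    ∫ x, u x ∂(μ.bind P) = ∫ x, ∫ y, u y ∂(P x) ∂μ := by
  rw [Measure.comp_eq_comp_const_apply] at hu ⊢
  rw [Kernel.integral_comp hu]
  simp

theorem DC.drift' (h : DC P V K l b) (x : X) : ∫ y, V y ∂(P x) ≤ l * V x + b := by
  refine (h.drift x).trans ?_
  have : K.indicator (fun _ => (1 : ℝ)) x ≤ 1 := Set.indicator_le_self' (by simp) x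
  have := h.b0
  nlinarith

theorem DC.drift'' (h : DC P V K l b) (x : X) : ∫ y, V y ∂(P x) ≤ (l + b) * V x := by
  have := h.drift' x
  have := h.b0
  have := h.V1 x
  nlinarith

theorem VB.integrable {u : X → ℝ} (hu : VB V u) {μ : Measure X} (hV : Integrable V μ) :
    Integrable u μ := by
  obtain ⟨hm, C, hC, hb⟩ := hu
  exact Integrable.mono' (hV.const_mul C) hm.aestronglyMeasurable (ae_of_all _ hb)

theorem VB.add {u v : X → ℝ} (hu : VB V u) (hv : VB V v) : VB V (fun x => u x + v x) := by
  obtain ⟨hm, C, hC, hb⟩ := hu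
  obtain ⟨hm', C', hC', hb'⟩ := hv
  refine ⟨hm.add hm', C + C', by positivity, fun x => ?_⟩
  have := hb x
  have := hb' x
  have := abs_add_le (u x) (v x)
  linarith

theorem VB.const_mul {u : X → ℝ} (hu : VB V u) (a : ℝ) : VB V (fun x => a * u x) := by
  obtain ⟨hm, C, hC, hb⟩ := hu
  refine ⟨hm.const_mul a, |a| * C, by positivity, fun x => ?_⟩
  rw [abs_mul, mul_assoc]
  exact mul_le_mul_of_nonneg_left (hb x) (abs_nonneg a)

theorem VB.sub {u v : X → ℝ} (hu : VB V u) (hv : VB V v) : VB V (fun x => u x - v x) := by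
  have := hu.add (hv.const_mul (-1))
  refine (by simpa [sub_eq_add_neg] using this)

theorem DC.vbV (h : DC P V K l b) : VB V V :=
  ⟨h.Vmeas, 1, zero_le_one, fun x => by rw [abs_of_nonneg (by linarith [h.V1 x])]; simp⟩

theorem DC.vbc (h : DC P V K l b) (a : ℝ) : VB V (fun _ => a) :=
  ⟨measurable_const, |a|, abs_nonneg a, fun x => le_mul_of_one_le_right (abs_nonneg a) (h.V1 x)⟩

theorem VB.sum {ι : Type*} (h : DC P V K l b) {s : Finset ι} {u : ι → X → ℝ}
    (hu : ∀ i ∈ s, VB V (u i)) : VB V (fun x => ∑ i ∈ s, u i x) := by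
  classical
  induction s using Finset.induction_on with
  | empty => simpa using h.vbc 0
  | insert a s ha ih =>
    simp only [Finset.sum_insert ha]
    exact (hu a (by simp)).add (ih fun i hi => hu i (by simp [hi]))

theorem VB.int (h : DC P V K l b) {u : X → ℝ} (hu : VB V u) (x : X) : Integrable u (P x) :=
  hu.integrable (h.int x)

theorem VB.TT (h : DC P V K l b) {u : X → ℝ} (hu : VB V u) : VB V (TT P u) := by
  obtain ⟨hm, C, hC, hb⟩ := id hu
  refine ⟨(hm.stronglyMeasurable.integral_kernel (κ := P)).measurable, C * (l + b),
    mul_nonneg hC (by linarith [h.l0, h.b0]), fun x => ?_⟩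
  calc |∫ y, u y ∂(P x)| ≤ ∫ y, |u y| ∂(P x) := abs_integral_le_integral_abs
    _ ≤ ∫ y, C * V y ∂(P x) := integral_mono (hu.int h x).abs ((h.int x).const_mul C) hb
    _ = C * ∫ y, V y ∂(P x) := integral_const_mul _ _
    _ ≤ C * ((l + b) * V x) := mul_le_mul_of_nonneg_left (h.drift'' x) hC
    _ = _ := by ring

theorem VB.iter (h : DC P V K l b) {u : X → ℝ} (hu : VB V u) (k : ℕ) :
    VB V ((_root_.TT P)^[k] u) := by
  induction k with
  | zero => exact hu
  | succ k ih => rw [Function.iterate_succ_apply']; exact ih.TT h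

theorem TT_add (h : DC P V K l b) {u v : X → ℝ} (hu : VB V u) (hv : VB V v) (x : X) :
    TT P (fun x => u x + v x) x = TT P u x + TT P v x :=
  integral_add (hu.int h x) (hv.int h x)

theorem TT_const_mul (u : X → ℝ) (a : ℝ) (x : X) :
    TT P (fun x => a * u x) x = a * TT P u x :=
  integral_const_mul _ _

instance kpow_markov (k : ℕ) : IsMarkovKernel (kpow P k) := by
  induction k with
  | zero => unfold kpow; infer_instance
  | succ k ih => unfold kpow; infer_instance

theorem kpow_add (a m : ℕ) : kpow P (a + m) = kpow P m ∘ₖ kpow P a := by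
  induction m with
  | zero => simp [kpow]
  | succ m ih =>
    rw [← add_assoc]
    simp only [kpow]
    rw [ih, Kernel.comp_assoc]

theorem kpow_intV (h : DC P V K l b) (k : ℕ) (x : X) : Integrable V (kpow P k x) := by
  induction k with
  | zero =>
    simp only [kpow, Kernel.id_apply]
    exact integrable_dirac' h.Vmeas.stronglyMeasurable (by simp)
  | succ k ih =>
    simp only [kpow]
    rw [integrable_comp_iff h.Vmeas.aestronglyMeasurable]
    refine ⟨ae_of_all _ h.int, ?_⟩
    have : (fun y => ∫ z, ‖V z‖ ∂(P y)) = TT P V := by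
      ext y
      refine integral_congr_ae (ae_of_all _ fun z => ?_)
      simp only [Real.norm_eq_abs]
      exact abs_of_nonneg (by linarith [h.V1 z])
    rw [this]
    exact (h.vbV.TT h).integrable ih

theorem kpow_integral (h : DC P V K l b) {u : X → ℝ} (hu : VB V u) (k : ℕ) (x : X) :
    ∫ y, u y ∂(kpow P k x) = (TT P)^[k] u x := by
  induction k generalizing u with
  | zero =>
    simp only [kpow, Kernel.id_apply, Function.iterate_zero, id]
    exact integral_dirac' _ _ hu.1.stronglyMeasurable
  | succ k ih =>
    have := hu.integrable (kpow_intV h (k + 1) x)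
    simp only [kpow] at this ⊢
    rw [Kernel.integral_comp this, Function.iterate_succ_apply]
    exact ih (hu.TT h)

theorem kpow_step (h : DC P V K l b) (k : ℕ) (x : X) :
    ∫ y, V y ∂(kpow P (k + 1) x)
      ≤ l * ∫ y, V y ∂(kpow P k x) + b * (kpow P k x).real K := by
  have h1 := h.vbV.integrable (kpow_intV h (k + 1) x)
  simp only [kpow] at h1 ⊢
  rw [Kernel.integral_comp h1]
  have iK : Integrable (K.indicator (fun _ => (1 : ℝ))) (kpow P k x) :=
    (integrable_const 1).indicator h.Kmeas
  calc ∫ y, ∫ z, V z ∂(P y) ∂(kpow P k x)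
      ≤ ∫ y, (l * V y + b * K.indicator (fun _ => 1) y) ∂(kpow P k x) :=
        integral_mono ((h.vbV.TT h).integrable (kpow_intV h k x))
          (((kpow_intV h k x).const_mul l).add (iK.const_mul b)) h.drift
    _ = _ := by
      rw [integral_add ((kpow_intV h k x).const_mul l) (iK.const_mul b), integral_const_mul,
        integral_const_mul, integral_indicator_const _ h.Kmeas]
      simp

theorem kpow_zeroV (h : DC P V K l b) (x : X) : ∫ y, V y ∂(kpow P 0 x) = V x := by
  rw [kpow_integral h h.vbV]; rfl

theorem kpow_drift (h : DC P V K l b) (k : ℕ) (x : X) :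
    ∫ y, V y ∂(kpow P k x) ≤ l ^ k * V x + b / (1 - l) := by
  have hl := h.l0
  have hl1 := h.l1
  have hb := h.b0
  have hB : l * (b / (1 - l)) + b = b / (1 - l) := by
    have : 1 - l ≠ 0 := by linarith
    field_simp; ring
  induction k with
  | zero =>
    rw [kpow_zeroV h]
    have : 0 ≤ b / (1 - l) := div_nonneg hb.le (by linarith)
    simpa using this
  | succ k ih =>
    have h1 := kpow_step h k x
    have h2 : (kpow P k x).real K ≤ 1 := measureReal_le_one
    have h3 := mul_le_mul_of_nonneg_left ih hl.le
    rw [pow_succ]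
    nlinarith

theorem kpow_visit (h : DC P V K l b) (n : ℕ) (x : X) :
    1 - l ^ n * (V x + b) ≤ b * ∑ i ∈ Finset.range n, (kpow P (i + 1) x).real K := by
  have hl := h.l0
  have hl1 := h.l1
  have hb := h.b0
  have key : ∫ y, V y ∂(kpow P (n + 1) x)
      ≤ l ^ n * (V x + b) + b * ∑ i ∈ Finset.range n, (kpow P (i + 1) x).real K := by
    induction n with
    | zero =>
      have h1 := kpow_step h 0 x
      rw [kpow_zeroV h] at h1
      have h2 : (kpow P 0 x).real K ≤ 1 := measureReal_le_one
      have := h.V1 x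
      simp only [pow_zero, Finset.range_zero, Finset.sum_empty]
      nlinarith
    | succ n ih =>
      have h1 := kpow_step h (n + 1) x
      rw [Finset.sum_range_succ, pow_succ]
      have h3 := mul_le_mul_of_nonneg_left ih hl.le
      have h4 : 0 ≤ ∑ i ∈ Finset.range n, (kpow P (i + 1) x).real K :=
        Finset.sum_nonneg fun _ _ => measureReal_nonneg
      have h5 : l * (b * ∑ i ∈ Finset.range n, (kpow P (i + 1) x).real K)
        ≤ b * ∑ i ∈ Finset.range n, (kpow P (i + 1) x).real K :=
        mul_le_of_le_one_left (by positivity) hl1.le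
      linarith
  have : (1 : ℝ) ≤ ∫ y, V y ∂(kpow P (n + 1) x) := by
    have := integral_mono (integrable_const (1 : ℝ)) (kpow_intV h (n + 1) x) h.V1
    simpa using this
  linarith

/-- Averaged kernel. -/
def QM (P : Kernel X X) (N : ℕ) (x : X) : Measure X :=
  (N : ℝ≥0∞)⁻¹ • ∑ k ∈ Finset.range N, kpow P (k + 1) x

theorem QM_prob {N : ℕ} (hN : 0 < N) (x : X) : IsProbabilityMeasure (QM P N x) := by
  constructor
  simp only [QM, Measure.smul_apply, Measure.finsetSum_apply, measure_univ, Finset.sum_const,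
    Finset.card_range, nsmul_eq_mul, mul_one, smul_eq_mul]
  exact ENNReal.inv_mul_cancel (by exact_mod_cast hN.ne') (by simp)

theorem QM_intV (h : DC P V K l b) {N : ℕ} (hN : 0 < N) (x : X) : Integrable V (QM P N x) := by
  unfold QM
  refine Integrable.smul_measure ?_ (by simp; lia)
  exact integrable_finsetSum_measure.2 fun k _ => kpow_intV h (k + 1) x

theorem QM_integral (h : DC P V K l b) {u : X → ℝ} (hu : VB V u) (N : ℕ) (x : X) :
    ∫ y, u y ∂(QM P N x) = (N : ℝ)⁻¹ * ∑ k ∈ Finset.range N, (TT P)^[k + 1] u x := by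
  unfold QM
  rw [integral_smul_measure, integral_finsetSum_measure
    (fun k _ => hu.integrable (kpow_intV h (k + 1) x))]
  simp only [ENNReal.toReal_inv, ENNReal.toReal_natCast, smul_eq_mul]
  congr 1
  exact Finset.sum_congr rfl fun k _ => kpow_integral h hu (k + 1) x

theorem QM_drift (h : DC P V K l b) {N : ℕ} (hN : 0 < N) (x : X) :
    ∫ y, V y ∂(QM P N x) ≤ l * V x + b / (1 - l) := by
  rw [QM_integral h h.vbV]
  have : ∑ k ∈ Finset.range N, (TT P)^[k + 1] V x
      ≤ ∑ k ∈ Finset.range N, (l * V x + b / (1 - l)) := by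
    refine Finset.sum_le_sum fun k _ => ?_
    rw [← kpow_integral h h.vbV]
    refine (kpow_drift h (k + 1) x).trans ?_
    have : l ^ (k + 1) ≤ l := pow_le_of_le_one h.l0.le h.l1.le (by simp)
    have := h.V1 x
    gcongr
  rw [Finset.sum_const, Finset.card_range, nsmul_eq_mul] at this
  rwa [inv_mul_le_iff₀ (by exact_mod_cast hN)]

theorem QM_minor (h : DC P V K l b) {δ : ℝ} (hδ : 0 < δ) {m : ℕ} {ν : Measure X}
    [IsProbabilityMeasure ν]
    (hminor : ∀ x ∈ K, ∀ A : Set X, MeasurableSet A →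
      ENNReal.ofReal δ * ν A ≤ (kpow P m) x A) (r : ℝ) :
    ∃ N : ℕ, 0 < N ∧ ∃ ν' : Measure X, IsFiniteMeasure ν' ∧ 0 < ν'.real Set.univ ∧
      ∀ x, V x ≤ r → ν' ≤ QM P N x := by
  have hb := h.b0
  obtain ⟨n, hn⟩ : ∃ n : ℕ, l ^ n * (|r| + b) < 1 / 2 := by
    have := (tendsto_pow_atTop_nhds_zero_of_lt_one h.l0.le h.l1).mul_const (|r| + b)
    rw [zero_mul] at this
    exact (this.eventually (gt_mem_nhds (by norm_num : (0 : ℝ) < 1 / 2))).exists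
  have hN : 0 < n + 1 + m := by omega
  refine ⟨n + 1 + m, hN, (((n + 1 + m : ℕ) : ℝ≥0∞)⁻¹ * (ENNReal.ofReal δ * ENNReal.ofReal (1 / (2 * b)))) • ν,
    ?_, ?_, ?_⟩
  · refine Measure.smul_finite _ ?_
    exact ENNReal.mul_ne_top (ENNReal.inv_ne_top.2 (by exact_mod_cast hN.ne'))
      (ENNReal.mul_ne_top (by simp) (by simp))
  · simp only [measureReal_ennreal_smul_apply, probReal_univ, mul_one, ENNReal.toReal_mul,
      ENNReal.toReal_inv, ENNReal.toReal_natCast]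
    rw [ENNReal.toReal_ofReal hδ.le, ENNReal.toReal_ofReal (by positivity)]
    positivity
  · intro x hx
    refine Measure.le_iff.2 fun A hA => ?_
    simp only [QM, Measure.smul_apply, Measure.finsetSum_apply, smul_eq_mul]
    rw [mul_assoc]
    gcongr
    have hstep : ∀ i, ENNReal.ofReal δ * ν A * kpow P (i + 1) x K ≤ kpow P (i + m + 1) x A := by
      intro i
      rw [show i + m + 1 = (i + 1) + m by ring, kpow_add (i + 1) m, Kernel.comp_apply' _ _ _ hA]
      calc ENNReal.ofReal δ * ν A * kpow P (i + 1) x K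
          = ∫⁻ z in K, ENNReal.ofReal δ * ν A ∂(kpow P (i + 1) x) := by
            rw [setLIntegral_const]
        _ ≤ ∫⁻ z in K, kpow P m z A ∂(kpow P (i + 1) x) :=
            setLIntegral_mono' h.Kmeas fun z hz => hminor z hz A hA
        _ ≤ _ := setLIntegral_le_lintegral _ _
    have hvis : ENNReal.ofReal (1 / (2 * b)) ≤ ∑ i ∈ Finset.range n, kpow P (i + 1) x K := by
      have h1 := kpow_visit h n x
      have h2 : l ^ n * (V x + b) ≤ l ^ n * (|r| + b) := by
        have := pow_nonneg h.l0.le n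
        have : V x ≤ |r| := hx.trans (le_abs_self r)
        gcongr
      have h3 : 1 / (2 * b) ≤ ∑ i ∈ Finset.range n, (kpow P (i + 1) x).real K := by
        rw [div_le_iff₀ (by positivity)]
        linarith
      refine (ENNReal.ofReal_le_ofReal h3).trans (le_of_eq ?_)
      rw [ENNReal.ofReal_sum_of_nonneg (fun _ _ => measureReal_nonneg)]
      exact Finset.sum_congr rfl fun i _ => ofReal_measureReal
    calc ENNReal.ofReal δ * ENNReal.ofReal (1 / (2 * b)) * ν A
        = ENNReal.ofReal δ * ν A * ENNReal.ofReal (1 / (2 * b)) := by ring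
      _ ≤ ENNReal.ofReal δ * ν A * ∑ i ∈ Finset.range n, kpow P (i + 1) x K := by gcongr
      _ = ∑ i ∈ Finset.range n, ENNReal.ofReal δ * ν A * kpow P (i + 1) x K := Finset.mul_sum _ _ _
      _ ≤ ∑ i ∈ Finset.range n, kpow P (i + m + 1) x A := Finset.sum_le_sum fun i _ => hstep i
      _ = ∑ k ∈ (Finset.range n).image (· + m), kpow P (k + 1) x A := by
          rw [Finset.sum_image (by intro a _ b _ hab; simpa using hab)]
      _ ≤ _ := by
          refine Finset.sum_le_sum_of_subset fun k hk => ?_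
          simp only [Finset.mem_image, Finset.mem_range] at hk ⊢
          obtain ⟨i, hi, rfl⟩ := hk
          omega

end ergodic

section ergodic2

variable {X : Type*} [MeasurableSpace X] {P : Kernel X X} [IsMarkovKernel P] {V : X → ℝ}
  {K : Set X} {l b : ℝ}

/-- Coboundaries. -/
def Cob (P : Kernel X X) (V : X → ℝ) (u : X → ℝ) : Prop :=
  ∃ G, VB V G ∧ ∀ x, u x = G x - TT P G x

theorem Cob.add (h : DC P V K l b) {u v : X → ℝ} (hu : Cob P V u) (hv : Cob P V v) :
    Cob P V (fun x => u x + v x) := by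
  obtain ⟨G, hG, e⟩ := hu
  obtain ⟨H, hH, e'⟩ := hv
  refine ⟨_, hG.add hH, fun x => ?_⟩
  simp only [TT_add h hG hH, e, e']; ring

theorem Cob.const_mul {u : X → ℝ} (hu : Cob P V u) (a : ℝ) :
    Cob P V (fun x => a * u x) := by
  obtain ⟨G, hG, e⟩ := hu
  refine ⟨_, hG.const_mul a, fun x => ?_⟩
  simp only [TT_const_mul, e]; ring

theorem Cob.zero (h : DC P V K l b) : Cob P V (fun _ => 0) :=
  ⟨_, h.vbc 0, fun x => by simp [TT]⟩

theorem Cob.sum (h : DC P V K l b) {n : ℕ} {u : ℕ → X → ℝ}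
    (hu : ∀ i, Cob P V (u i)) : Cob P V (fun x => ∑ i ∈ Finset.range n, u i x) := by
  induction n with
  | zero => simpa using Cob.zero h
  | succ n ih =>
    simp only [Finset.sum_range_succ]
    exact ih.add h (hu n)

theorem Cob.iter (h : DC P V K l b) {u : X → ℝ} (hu : VB V u) (k : ℕ) :
    Cob P V (fun x => u x - (TT P)^[k] u x) := by
  induction k with
  | zero => simpa using Cob.zero h
  | succ k ih =>
    have h2 : Cob P V (fun x => (TT P)^[k] u x - TT P ((TT P)^[k] u) x) :=
      ⟨_, hu.iter h k, fun x => rfl⟩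
    have := ih.add h h2
    simpa [Function.iterate_succ_apply'] using this

/-- Averaged operator. -/
def QO (P : Kernel X X) (N : ℕ) (u : X → ℝ) : X → ℝ :=
  fun x => ∫ y, u y ∂(QM P N x)

theorem VB.QO (h : DC P V K l b) {u : X → ℝ} (hu : VB V u) (N : ℕ) : VB V (QO P N u) := by
  have : _root_.QO P N u = fun x => (N : ℝ)⁻¹ * ∑ k ∈ Finset.range N, (_root_.TT P)^[k + 1] u x :=
    funext fun x => QM_integral h hu N x
  rw [this]
  exact (VB.sum h fun k _ => hu.iter h (k + 1)).const_mul _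

theorem VB.QOiter (h : DC P V K l b) {u : X → ℝ} (hu : VB V u) (N k : ℕ) :
    VB V ((_root_.QO P N)^[k] u) := by
  induction k with
  | zero => exact hu
  | succ k ih => rw [Function.iterate_succ_apply']; exact ih.QO h N

theorem Cob.QO (h : DC P V K l b) {u : X → ℝ} (hu : VB V u) {N : ℕ} (hN : 0 < N) :
    Cob P V (fun x => u x - QO P N u x) := by
  have h1 := (Cob.sum h (n := N) (u := fun k x => u x - (TT P)^[k + 1] u x)
    fun k => Cob.iter h hu (k + 1)).const_mul (N : ℝ)⁻¹
  convert! h1 using 2 with x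
  have : (N : ℝ) ≠ 0 := by positivity
  simp only [_root_.QO]
  rw [QM_integral h hu, Finset.sum_sub_distrib]
  simp only [Finset.sum_const, Finset.card_range, nsmul_eq_mul]
  field_simp

theorem Cob.QOiter (h : DC P V K l b) {u : X → ℝ} (hu : VB V u) {N : ℕ} (hN : 0 < N) (k : ℕ) :
    Cob P V (fun x => u x - (_root_.QO P N)^[k] u x) := by
  induction k with
  | zero => simpa using Cob.zero h
  | succ k ih =>
    have := ih.add h (Cob.QO h (hu.QOiter h N k) hN)
    simpa [Function.iterate_succ_apply'] using this

theorem inv_TT (h : DC P V K l b) {π : Measure X} [IsProbabilityMeasure π]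
    (hπ : π.bind P = π) (hπV : Integrable V π) {u : X → ℝ} (hu : VB V u) :
    ∫ x, TT P u x ∂π = ∫ x, u x ∂π := by
  have := integral_bind_kernel (μ := π) (P := P) (u := u) (by rw [hπ]; exact hu.integrable hπV)
  rw [hπ] at this
  exact this.symm

theorem inv_cob (h : DC P V K l b) {π : Measure X} [IsProbabilityMeasure π]
    (hπ : π.bind P = π) (hπV : Integrable V π) {u : X → ℝ} (hu : Cob P V u) :
    ∫ x, u x ∂π = 0 := by
  obtain ⟨G, hG, e⟩ := hu
  simp_rw [e]
  rw [integral_sub (hG.integrable hπV) ((hG.TT h).integrable hπV), inv_TT h hπ hπV hG, sub_self]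

/-- Functions of mean zero are approximately coboundaries. -/
theorem approx_cob (h : DC P V K l b) {δ : ℝ} (hδ : 0 < δ) {m : ℕ} {ν : Measure X}
    [IsProbabilityMeasure ν]
    (hminor : ∀ x ∈ K, ∀ A : Set X, MeasurableSet A →
      ENNReal.ofReal δ * ν A ≤ (kpow P m) x A)
    {π : Measure X} [IsProbabilityMeasure π]
    (hπ : π.bind P = π) (hπV : Integrable V π) {u : X → ℝ} (hu : VB V u)
    (hu0 : ∫ x, u x ∂π = 0) (ε : ℝ) (hε : 0 < ε) :
    ∃ G, VB V G ∧ ∀ x, |u x - (G x - TT P G x)| ≤ ε * V x := by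
  have hl := h.l0
  have hl1 := h.l1
  have hb := h.b0
  have hV1 := h.V1
  set B := b / (1 - l) with hB
  have hB0 : 0 ≤ B := div_nonneg hb.le (by linarith)
  set r := (2 * B + 1) / (1 - l) with hr
  have hr' : 2 * B + l * r < r := by
    have : r * (1 - l) = 2 * B + 1 := by rw [hr]; field_simp [show (1 - l) ≠ 0 by linarith]
    linarith
  obtain ⟨N, hN, ν', hν'f, hν', hmin⟩ := QM_minor h hδ hminor r
  have : ∀ x, IsProbabilityMeasure (QM P N x) := fun x => QM_prob hN x
  obtain ⟨β, hβ, ρ, hρ0, hρ1, hcon⟩ := hm_contract (QM P N) V (fun x => by linarith [hV1 x])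
    (fun x => QM_intV h hN x) l B r hl.le hl1 hB0 hr' ν' hν' (fun x => QM_drift h hN x) hmin
  obtain ⟨hum, C, hC, hub⟩ := id hu
  have hosc : ∀ k x y, |(QO P N)^[k] u x - (QO P N)^[k] u y|
      ≤ ρ ^ k * (C / β) * (2 + β * V x + β * V y) := by
    intro k
    induction k with
    | zero =>
      intro x y
      have h1 := hub x
      have h2 := hub y
      have h3 := abs_sub (u x) (u y)
      have h4 : (C / β) * (2 + β * V x + β * V y) = 2 * (C / β) + C * V x + C * V y := by
        field_simp
      have h5 : 0 ≤ C / β := by positivity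
      simp only [Function.iterate_zero, id, pow_zero, one_mul]
      linarith
    | succ k ih =>
      intro x y
      have := hcon _ (hu.QOiter h N k).1 (ρ ^ k * (C / β)) (by positivity) ih x y
      rw [Function.iterate_succ_apply', pow_succ']
      simpa only [QO, mul_assoc] using this
  have hmean : ∀ k, ∫ x, (QO P N)^[k] u x ∂π = 0 := by
    intro k
    have h1 := inv_cob h hπ hπV (Cob.QOiter h hu hN k)
    rw [integral_sub (hu.integrable hπV) ((hu.QOiter h N k).integrable hπV), hu0] at h1
    linarith
  set v := ∫ x, V x ∂π with hv
  have hv1 : 1 ≤ v := by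
    have := integral_mono (integrable_const (1 : ℝ)) hπV hV1
    simpa using this
  have hdec : ∀ k x, |(QO P N)^[k] u x| ≤ ρ ^ k * (C / β * (2 + β + β * v)) * V x := by
    intro k x
    have i1 := (hu.QOiter h N k).integrable hπV
    have h1 : (QO P N)^[k] u x = ∫ y, ((QO P N)^[k] u x - (QO P N)^[k] u y) ∂π := by
      rw [integral_sub (integrable_const _) i1, hmean k]; simp
    have i2 : Integrable (fun y => ρ ^ k * (C / β) * (2 + β * V x + β * V y)) π :=
      ((integrable_const _).add (hπV.const_mul β)).const_mul _
    calc |(QO P N)^[k] u x| = |∫ y, ((QO P N)^[k] u x - (QO P N)^[k] u y) ∂π| := by rw [← h1]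
      _ ≤ ∫ y, |(QO P N)^[k] u x - (QO P N)^[k] u y| ∂π := abs_integral_le_integral_abs
      _ ≤ ∫ y, ρ ^ k * (C / β) * (2 + β * V x + β * V y) ∂π :=
        integral_mono ((integrable_const _).sub i1).abs i2 (hosc k x)
      _ = ρ ^ k * (C / β) * (2 + β * V x + β * v) := by
        rw [integral_const_mul, integral_add (integrable_const _) (hπV.const_mul β),
          integral_const_mul]
        simp [hv]
      _ ≤ ρ ^ k * (C / β) * ((2 + β + β * v) * V x) := by
        have := hV1 x
        have h6 : 0 ≤ (2 + β * v) * (V x - 1) := mul_nonneg (by positivity) (by linarith)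
        gcongr
        linarith
      _ = _ := by ring
  have hlim : Tendsto (fun k : ℕ => ρ ^ k * (C / β * (2 + β + β * v))) atTop (𝓝 0) := by
    simpa using (tendsto_pow_atTop_nhds_zero_of_lt_one hρ0 hρ1).mul_const _
  obtain ⟨k, hk⟩ := (hlim.eventually (gt_mem_nhds hε)).exists
  obtain ⟨G, hG, e⟩ := Cob.QOiter h hu hN k
  refine ⟨G, hG, fun x => ?_⟩
  rw [← e, sub_sub_cancel]
  refine (hdec k x).trans ?_
  have := hV1 x
  gcongr

end ergodic2

section chain

variable {X : Type*} [MeasurableSpace X] {P : Kernel X X} [IsMarkovKernel P] {V : X → ℝ}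
  {K : Set X} {l b : ℝ} {μ π : Measure X} {Pμ : Measure (ℕ → X)}

/-- The past up to time `n`. -/
def past (n : ℕ) (ω : ℕ → X) : Fin (n + 1) → X := fun i => ω i

theorem measurable_past (n : ℕ) : Measurable (past (X := X) n) :=
  measurable_pi_lambda _ fun i => measurable_pi_apply _

theorem chain_law [IsProbabilityMeasure Pμ] (hch : IsMarkovChainLaw μ P Pμ) (n : ℕ) :
    Pμ.map (fun ω => (past n ω, ω (n + 1)))
      = (Pμ.map (past n)) ⊗ₘ (P.comap (fun z : Fin (n + 1) → X => z (Fin.last n))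
          (measurable_pi_apply _)) := by
  have hm1 : Measurable (fun ω : ℕ → X => (past n ω, ω (n + 1))) :=
    (measurable_past n).prodMk (measurable_pi_apply _)
  have : IsProbabilityMeasure (Pμ.map (past n)) :=
    Measure.isProbabilityMeasure_map (measurable_past n).aemeasurable
  have : IsProbabilityMeasure (Pμ.map (fun ω => (past n ω, ω (n + 1)))) :=
    Measure.isProbabilityMeasure_map hm1.aemeasurable
  refine Measure.ext_prod fun {s t} hs ht => ?_
  rw [Measure.compProd_apply_prod hs ht, Measure.map_apply hm1 (hs.prod ht)]
  have key := hch.2.2 n (s.indicator fun _ => 1) (t.indicator fun _ => 1)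
    (measurable_const.indicator hs) (measurable_const.indicator ht)
  have e1 : ∫⁻ ω, s.indicator (fun _ => (1 : ℝ≥0∞)) (fun i : Fin (n + 1) => ω i)
      * t.indicator (fun _ => 1) (ω (n + 1)) ∂Pμ
      = Pμ ((fun ω => (past n ω, ω (n + 1))) ⁻¹' s ×ˢ t) := by
    rw [← lintegral_indicator_one (hm1 (hs.prod ht))]
    refine lintegral_congr fun ω => ?_
    by_cases h1 : past n ω ∈ s
    · have h1' : (fun i : Fin (n + 1) => ω i) ∈ s := h1
      by_cases h2 : ω (n + 1) ∈ t <;> simp [Set.indicator, h1, h1', h2]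
    · have h1' : (fun i : Fin (n + 1) => ω i) ∉ s := h1
      by_cases h2 : ω (n + 1) ∈ t <;> simp [Set.indicator, h1, h1', h2]
  rw [← e1, key, ← lintegral_indicator hs, lintegral_map
    ((Measurable.indicator ((Kernel.measurable_coe _ ht)) hs)) (measurable_past n)]
  refine lintegral_congr fun ω => ?_
  rw [lintegral_indicator_const ht, one_mul]
  by_cases h1 : past n ω ∈ s
  · have h1' : (fun i : Fin (n + 1) => ω i) ∈ s := h1
    simp [h1, h1', past]
  · have h1' : (fun i : Fin (n + 1) => ω i) ∉ s := h1
    simp [h1, h1']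

theorem chain_int {E : Type*} [NormedAddCommGroup E] [NormedSpace ℝ E] [IsProbabilityMeasure Pμ]
    (hch : IsMarkovChainLaw μ P Pμ) (n : ℕ)
    {F : (Fin (n + 1) → X) × X → E} (hF : StronglyMeasurable F)
    (hi : Integrable (fun ω => F (past n ω, ω (n + 1))) Pμ) :
    ∫ ω, F (past n ω, ω (n + 1)) ∂Pμ = ∫ ω, ∫ y, F (past n ω, y) ∂(P (ω n)) ∂Pμ := by
  have hm1 : Measurable (fun ω : ℕ → X => (past n ω, ω (n + 1))) :=
    (measurable_past n).prodMk (measurable_pi_apply _)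
  have : IsProbabilityMeasure (Pμ.map (past n)) :=
    Measure.isProbabilityMeasure_map (measurable_past n).aemeasurable
  rw [← integral_map (f := F) hm1.aemeasurable hF.aestronglyMeasurable, chain_law hch,
    Measure.integral_compProd, integral_map (measurable_past n).aemeasurable]
  · rfl
  · exact (hF.integral_kernel_prod_right' (κ := P.comap (fun z : Fin (n + 1) → X => z (Fin.last n))
          (measurable_pi_apply _))).aestronglyMeasurable
  · rw [← chain_law hch]
    exact (integrable_map_measure hF.aestronglyMeasurable hm1.aemeasurable).2 hi

theorem chain_integrable {E : Type*} [NormedAddCommGroup E]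
    [IsProbabilityMeasure Pμ] (hch : IsMarkovChainLaw μ P Pμ) (n : ℕ)
    {H : X × X → E} (hH : StronglyMeasurable H) (hHi : ∀ x, Integrable (fun y => H (x, y)) (P x))
    {C : ℝ} (hHb : ∀ x, ∫ y, ‖H (x, y)‖ ∂(P x) ≤ C * V x)
    (hV : Integrable (fun ω => V (ω n)) Pμ) :
    Integrable (fun ω => H (ω n, ω (n + 1))) Pμ := by
  have hm1 : Measurable (fun ω : ℕ → X => (past n ω, ω (n + 1))) :=
    (measurable_past n).prodMk (measurable_pi_apply _)
  have : IsProbabilityMeasure (Pμ.map (past n)) :=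
    Measure.isProbabilityMeasure_map (measurable_past n).aemeasurable
  set F : (Fin (n + 1) → X) × X → E := fun z => H (z.1 (Fin.last n), z.2) with hFd
  have hF : StronglyMeasurable F := hH.comp_measurable
    (((measurable_pi_apply _).comp measurable_fst).prodMk measurable_snd)
  have : Integrable (F ∘ (fun ω => (past n ω, ω (n + 1)))) Pμ := by
    rw [← integrable_map_measure hF.aestronglyMeasurable hm1.aemeasurable, chain_law hch,
      Measure.integrable_compProd_iff hF.aestronglyMeasurable]
    refine ⟨ae_of_all _ fun z => hHi _, ?_⟩
    rw [integrable_map_measure _ (measurable_past n).aemeasurable]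
    · refine Integrable.mono' (hV.const_mul C) ?_ (ae_of_all _ fun ω => ?_)
      · exact ((hF.norm.integral_kernel_prod_right' (κ := P.comap (fun z : Fin (n + 1) → X => z (Fin.last n))
          (measurable_pi_apply _))).comp_measurable (measurable_past n)).aestronglyMeasurable
      · simp only [Function.comp]
        rw [Real.norm_of_nonneg (integral_nonneg fun _ => norm_nonneg _)]
        exact hHb (ω n)
    · exact (hF.norm.integral_kernel_prod_right' (κ := P.comap (fun z : Fin (n + 1) → X => z (Fin.last n))
          (measurable_pi_apply _))).aestronglyMeasurable
  exact this

theorem chain_mul [IsProbabilityMeasure Pμ]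
    (hch : IsMarkovChainLaw μ P Pμ) (n : ℕ)
    {U : (Fin (n + 1) → X) → ℂ} (hU : Measurable U) (hU1 : ∀ z, ‖U z‖ ≤ 1)
    {H : X × X → ℂ} (hH : Measurable H)
    (hi : Integrable (fun ω => H (ω n, ω (n + 1))) Pμ) :
    ∫ ω, U (past n ω) * H (ω n, ω (n + 1)) ∂Pμ
      = ∫ ω, U (past n ω) * ∫ y, H (ω n, y) ∂(P (ω n)) ∂Pμ := by
  have hF : StronglyMeasurable (fun z : (Fin (n + 1) → X) × X => U z.1 * H (z.1 (Fin.last n), z.2)) := by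
    refine Measurable.stronglyMeasurable ?_
    exact (hU.comp measurable_fst).mul (hH.comp
      (((measurable_pi_apply _).comp measurable_fst).prodMk measurable_snd))
  have := chain_int hch n hF (by
    refine Integrable.bdd_mul (c := 1) hi ?_ ?_
    · exact (hU.comp (measurable_past n)).aestronglyMeasurable
    · exact ae_of_all _ fun ω => hU1 _)
  simp only [integral_const_mul] at this
  exact this

/-- All hypotheses on the ergodic chain. -/
structure Erg (P : Kernel X X) (V : X → ℝ) (K : Set X) (l b : ℝ) (π μ : Measure X)
    (Pμ : Measure (ℕ → X)) : Prop where
  dc : DC P V K l b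
  cob : ∀ u, VB V u → ∫ x, u x ∂π = 0 → ∀ ε > 0, ∃ G, VB V G ∧
    ∀ x, |u x - (G x - TT P G x)| ≤ ε * V x
  piV : Integrable V π
  chain : IsMarkovChainLaw μ P Pμ
  init : Integrable (fun ω : ℕ → X => V (ω 0)) Pμ

variable [IsProbabilityMeasure π] [IsProbabilityMeasure Pμ]

theorem Erg.intV (h : Erg P V K l b π μ Pμ) (j : ℕ) :
    Integrable (fun ω : ℕ → X => V (ω j)) Pμ := by
  induction j with
  | zero => exact h.init
  | succ j ih =>
    refine chain_integrable (V := V) h.chain j (H := fun z : X × X => V z.2) (C := l + b)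
      (h.dc.Vmeas.comp measurable_snd).stronglyMeasurable h.dc.int (fun x => ?_) ih
    refine le_trans (le_of_eq (integral_congr_ae (ae_of_all _ fun y => ?_))) (h.dc.drift'' x)
    exact Real.norm_of_nonneg (by linarith [h.dc.V1 y])

theorem Erg.int (h : Erg P V K l b π μ Pμ) {u : X → ℝ} (hu : VB V u) (j : ℕ) :
    Integrable (fun ω : ℕ → X => u (ω j)) Pμ := by
  obtain ⟨hm, C, hC, hb⟩ := hu
  exact Integrable.mono' ((h.intV j).const_mul C)
    (hm.comp (measurable_pi_apply j)).aestronglyMeasurable (ae_of_all _ fun ω => hb _)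

theorem Erg.step (h : Erg P V K l b π μ Pμ) {u : X → ℝ} (hu : VB V u) (j : ℕ) :
    ∫ ω, u (ω (j + 1)) ∂Pμ = ∫ ω, TT P u (ω j) ∂Pμ :=
  chain_int h.chain j (F := fun z => u z.2) (hu.1.comp measurable_snd).stronglyMeasurable
    (h.int hu (j + 1))

theorem Erg.bdd (h : Erg P V K l b π μ Pμ) :
    ∃ C, 0 ≤ C ∧ ∀ j, ∫ ω, V (ω j) ∂Pμ ≤ C := by
  have hl := h.dc.l0
  have hl1 := h.dc.l1
  have hb := h.dc.b0
  have hB : l * (b / (1 - l)) + b = b / (1 - l) := by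
    have : 1 - l ≠ 0 := by linarith
    field_simp; ring
  have hB0 : 0 ≤ b / (1 - l) := div_nonneg hb.le (by linarith)
  have h0 : 0 ≤ ∫ ω, V (ω 0) ∂Pμ := integral_nonneg fun ω => by
    have := h.dc.V1 (ω 0)
    simp only [Pi.zero_apply]; linarith
  refine ⟨∫ ω, V (ω 0) ∂Pμ + b / (1 - l), by positivity, fun j => ?_⟩
  induction j with
  | zero => linarith
  | succ j ih =>
    rw [h.step h.dc.vbV]
    have : ∫ ω, TT P V (ω j) ∂Pμ ≤ ∫ ω, (l * V (ω j) + b) ∂Pμ :=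
      integral_mono (h.int (h.dc.vbV.TT h.dc) j)
        (((h.intV j).const_mul l).add (integrable_const b)) fun ω => h.dc.drift' _
    rw [integral_add ((h.intV j).const_mul l) (integrable_const b), integral_const_mul] at this
    simp only [integral_const, probReal_univ, smul_eq_mul, one_mul] at this
    nlinarith

theorem Erg.abs_le (h : Erg P V K l b π μ Pμ) {C0 : ℝ}
    (hC0 : ∀ j, ∫ ω, V (ω j) ∂Pμ ≤ C0) {u : X → ℝ} {c : ℝ} (hc : 0 ≤ c)
    (hb : ∀ x, |u x| ≤ c * V x) (j : ℕ) : |∫ ω, u (ω j) ∂Pμ| ≤ c * C0 := by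
  calc |∫ ω, u (ω j) ∂Pμ| ≤ ∫ ω, |u (ω j)| ∂Pμ := abs_integral_le_integral_abs
    _ ≤ ∫ ω, c * V (ω j) ∂Pμ := integral_mono_of_nonneg (ae_of_all _ fun _ => abs_nonneg _)
        ((h.intV j).const_mul c) (ae_of_all _ fun _ => hb _)
    _ = c * ∫ ω, V (ω j) ∂Pμ := integral_const_mul _ _
    _ ≤ c * C0 := mul_le_mul_of_nonneg_left (hC0 j) hc

theorem Erg.avg (h : Erg P V K l b π μ Pμ) {u : X → ℝ} (hu : VB V u) :
    Tendsto (fun n : ℕ => (n : ℝ)⁻¹ * ∑ j ∈ Finset.range n, ∫ ω, u (ω j) ∂Pμ) atTop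
      (𝓝 (∫ x, u x ∂π)) := by
  obtain ⟨C0, hC00, hC0⟩ := h.bdd
  set a := ∫ x, u x ∂π with ha
  have hu0 : VB V (fun x => u x - a) := hu.sub (h.dc.vbc a)
  have hz : ∫ x, (u x - a) ∂π = 0 := by
    rw [integral_sub (hu.integrable h.piV) (integrable_const a)]; simp [ha]
  rw [Metric.tendsto_atTop]
  intro ε hε
  obtain ⟨G, hG, hq⟩ := h.cob _ hu0 hz (ε / (2 * (C0 + 1))) (by positivity)
  obtain ⟨-, CG, hCG, hGb⟩ := id hG
  have hlim : Tendsto (fun n : ℕ => 2 * (CG * C0) / (n : ℝ)) atTop (𝓝 0) :=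
    tendsto_const_div_atTop_nhds_zero_nat _
  obtain ⟨n0, hn0⟩ := eventually_atTop.1 (hlim.eventually (gt_mem_nhds (half_pos hε)))
  refine ⟨n0 + 1, fun n hn => ?_⟩
  have hnpos : (0 : ℝ) < n := by
    have : 0 < n := by omega
    exact_mod_cast this
  have hlt := hn0 n (by omega)
  set q : X → ℝ := fun x => u x - a - (G x - TT P G x) with hqd
  have hGT := hG.TT h.dc
  have hVBq : VB V q := hu0.sub (hG.sub hGT)
  have hterm : ∀ j, ∫ ω, u (ω j) ∂Pμ
      = a + (∫ ω, G (ω j) ∂Pμ - ∫ ω, G (ω (j + 1)) ∂Pμ) + ∫ ω, q (ω j) ∂Pμ := by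
    intro j
    rw [h.step hG]
    have e : ∀ ω : ℕ → X, u (ω j) = a + (G (ω j) - TT P G (ω j)) + q (ω j) := fun ω => by
      simp only [hqd]; ring
    simp_rw [e]
    have i1 : Integrable (fun ω : ℕ → X => G (ω j) - TT P G (ω j)) Pμ :=
      (h.int hG j).sub (h.int hGT j)
    have i2 : Integrable (fun ω : ℕ → X => a + (G (ω j) - TT P G (ω j))) Pμ :=
      (integrable_const a).add i1
    rw [integral_add i2 (h.int hVBq j), integral_add (integrable_const a) i1,
      integral_sub (h.int hG j) (h.int hGT j)]
    simp
  have hsum : ∑ j ∈ Finset.range n, ∫ ω, u (ω j) ∂Pμ = n * a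
      + (∫ ω, G (ω 0) ∂Pμ - ∫ ω, G (ω n) ∂Pμ) + ∑ j ∈ Finset.range n, ∫ ω, q (ω j) ∂Pμ := by
    simp_rw [hterm]
    rw [Finset.sum_add_distrib, Finset.sum_add_distrib,
      Finset.sum_range_sub' (fun j => ∫ ω, G (ω j) ∂Pμ)]
    simp
  have h1 := h.abs_le hC0 hCG hGb 0
  have h2 := h.abs_le hC0 hCG hGb n
  have h3 : |∑ j ∈ Finset.range n, ∫ ω, q (ω j) ∂Pμ| ≤ n * (ε / (2 * (C0 + 1)) * C0) := by
    refine (Finset.abs_sum_le_sum_abs _ _).trans ?_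
    refine (Finset.sum_le_sum fun j _ => h.abs_le hC0 (by positivity) hq j).trans ?_
    simp
  have h4 : ε / (2 * (C0 + 1)) * C0 ≤ ε / 2 := by
    rw [div_mul_eq_mul_div, div_le_div_iff₀ (by positivity) (by positivity)]
    nlinarith
  rw [Real.dist_eq, hsum]
  have e2 : (n : ℝ)⁻¹ * (n * a
      + (∫ ω, G (ω 0) ∂Pμ - ∫ ω, G (ω n) ∂Pμ) + ∑ j ∈ Finset.range n, ∫ ω, q (ω j) ∂Pμ) - a
      = (n : ℝ)⁻¹ * ((∫ ω, G (ω 0) ∂Pμ - ∫ ω, G (ω n) ∂Pμ)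
        + ∑ j ∈ Finset.range n, ∫ ω, q (ω j) ∂Pμ) := by
    field_simp; ring
  rw [e2, abs_mul, abs_of_pos (inv_pos.2 hnpos), inv_mul_lt_iff₀ hnpos]
  rw [div_lt_iff₀ hnpos] at hlt
  have h5 := mul_le_mul_of_nonneg_left h4 hnpos.le
  refine (abs_add_le _ _).trans_lt ?_
  have := abs_sub (∫ ω, G (ω 0) ∂Pμ) (∫ ω, G (ω n) ∂Pμ)
  linarith

theorem Erg.vanish (h : Erg P V K l b π μ Pμ) {u : ℕ → X → ℝ} {C : ℝ} (hC : 0 ≤ C)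
    (hm : ∀ n, Measurable (u n)) (h0 : ∀ n x, 0 ≤ u n x)
    (hb : ∀ n, 1 ≤ n → ∀ x, u n x ≤ C * V x)
    (hanti : ∀ m n, 1 ≤ m → m ≤ n → ∀ x, u n x ≤ u m x)
    (hlim : ∀ x, Tendsto (fun n => u n x) atTop (𝓝 0)) :
    Tendsto (fun n : ℕ => (n : ℝ)⁻¹ * ∑ j ∈ Finset.range n, ∫ ω, u n (ω j) ∂Pμ) atTop (𝓝 0) := by
  have hVB : ∀ n, 1 ≤ n → VB V (u n) := fun n hn =>
    ⟨hm n, C, hC, fun x => by rw [abs_of_nonneg (h0 n x)]; exact hb n hn x⟩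
  have hpi : Tendsto (fun n => ∫ x, u (n + 1) x ∂π) atTop (𝓝 0) := by
    have := tendsto_integral_of_dominated_convergence (F := fun n x => u (n + 1) x) (μ := π)
      (f := fun _ => 0)
      (fun x => C * V x) (fun n => (hm _).aestronglyMeasurable) (h.piV.const_mul C)
      (fun n => ae_of_all _ fun x => by
        rw [Real.norm_of_nonneg (h0 _ x)]; exact hb _ (by omega) x)
      (ae_of_all _ fun x => (hlim x).comp (tendsto_add_atTop_nat 1))
    simpa using this
  rw [Metric.tendsto_atTop]
  intro ε hε
  obtain ⟨m, hmε⟩ := (hpi.eventually (gt_mem_nhds hε)).exists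
  obtain ⟨n0, hn0⟩ := eventually_atTop.1 ((h.avg (hVB (m + 1) (by omega))).eventually
    (gt_mem_nhds hmε))
  refine ⟨n0 + (m + 1), fun n hn => ?_⟩
  have h1 := hn0 n (by omega)
  have h2 : (n : ℝ)⁻¹ * ∑ j ∈ Finset.range n, ∫ ω, u n (ω j) ∂Pμ
      ≤ (n : ℝ)⁻¹ * ∑ j ∈ Finset.range n, ∫ ω, u (m + 1) (ω j) ∂Pμ := by
    gcongr with j hj
    · exact h.int (hVB n (by omega)) j
    · exact h.int (hVB (m + 1) (by omega)) j
    · exact fun ω => hanti _ _ (by omega) (by omega) _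
  have h3 : 0 ≤ (n : ℝ)⁻¹ * ∑ j ∈ Finset.range n, ∫ ω, u n (ω j) ∂Pμ :=
    mul_nonneg (by positivity) (Finset.sum_nonneg fun j _ => integral_nonneg fun ω => h0 _ _)
  rw [Real.dist_eq, sub_zero, abs_of_nonneg h3]
  linarith

end chain

section clt

theorem exp_taylor (z : ℝ) : ‖Complex.exp (z * Complex.I) - (1 + z * Complex.I - z ^ 2 / 2)‖
    ≤ 4 * z ^ 2 * min 1 |z| := by
  have hn : ‖(z : ℂ) * Complex.I‖ = |z| := by simp
  have habs : |z| ^ 2 = z ^ 2 := sq_abs z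
  rcases le_or_gt |z| 1 with h | h
  · rw [min_eq_right h]
    have := Complex.exp_bound (x := (z : ℂ) * Complex.I) (by rw [hn]; exact h) (n := 3) (by norm_num)
    rw [hn] at this
    have e : ∑ m ∈ Finset.range 3, ((z : ℂ) * Complex.I) ^ m / (m.factorial : ℂ)
        = 1 + z * Complex.I - z ^ 2 / 2 := by
      simp [Finset.sum_range_succ, Nat.factorial, mul_pow]
      ring
    rw [e] at this
    refine this.trans ?_
    have h3 : 0 ≤ |z| ^ 3 := by positivity
    have : 4 * z ^ 2 * |z| = 4 * |z| ^ 3 := by rw [← habs]; ring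
    rw [this]
    norm_num [Nat.factorial]
    linarith
  · rw [min_eq_left h.le]
    calc _ ≤ ‖Complex.exp (z * Complex.I)‖ + ‖(1 + z * Complex.I - z ^ 2 / 2 : ℂ)‖ := norm_sub_le _ _
      _ ≤ 1 + ((1 + |z|) + z ^ 2 / 2) := by
          rw [Complex.norm_exp_ofReal_mul_I]
          gcongr
          refine (norm_sub_le _ _).trans ?_
          gcongr
          · refine (norm_add_le _ _).trans ?_
            rw [hn]; simp
          · simp
      _ ≤ _ := by nlinarith

theorem exp_sub_one (z : ℝ) : ‖Complex.exp (z * Complex.I) - 1‖ ≤ min 2 |z| := by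
  refine le_min ?_ ?_
  · refine (norm_sub_le _ _).trans ?_
    rw [Complex.norm_exp_ofReal_mul_I]; norm_num
  · have := Real.norm_exp_I_mul_ofReal_sub_one_le (x := z)
    rwa [mul_comm, Real.norm_eq_abs] at this

/-- error integrand -/
def errI (s D G : ℝ) : ℝ := 4 * D ^ 2 * min 1 (s * |D|) + |G| * min 2 (s * |D|)

theorem errI_nonneg {s : ℝ} (hs : 0 ≤ s) (D G : ℝ) : 0 ≤ errI s D G := by
  unfold errI; positivity

theorem errI_le {s : ℝ} (D G : ℝ) : errI s D G ≤ 4 * D ^ 2 + 2 * |G| := by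
  unfold errI
  have h1 := min_le_left 1 (s * |D|)
  have h2 := min_le_left 2 (s * |D|)
  have := abs_nonneg G
  nlinarith [sq_nonneg D]

theorem errI_mono {s t : ℝ} (hst : s ≤ t) (D G : ℝ) : errI s D G ≤ errI t D G := by
  unfold errI; gcongr

theorem errI_measurable {Y : Type*} [MeasurableSpace Y] {D G : Y → ℝ} (hD : Measurable D)
    (hG : Measurable G) (s : ℝ) : Measurable (fun y => errI s (D y) (G y)) := by
  unfold errI; fun_prop

theorem cexp_measurable {Y : Type*} [MeasurableSpace Y] {D : Y → ℝ} (hD : Measurable D)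
    (s : ℝ) : Measurable (fun y => Complex.exp ((s * D y : ℝ) * Complex.I)) := by
  fun_prop

theorem step_pt {s : ℝ} (hs : 0 ≤ s) (D G : ℝ) :
    ‖Complex.exp ((s * D : ℝ) * Complex.I) * (1 - (s ^ 2 * G / 2 : ℝ))
      - (1 + (s * D : ℝ) * Complex.I - ((s * D) ^ 2 / 2 : ℝ) - (s ^ 2 * G / 2 : ℝ))‖
      ≤ s ^ 2 * errI s D G := by
  have h1 := exp_taylor (s * D)
  have h2 := exp_sub_one (s * D)
  rw [abs_mul, abs_of_nonneg hs] at h1 h2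
  set E := Complex.exp ((s * D : ℝ) * Complex.I)
  have : E * (1 - (s ^ 2 * G / 2 : ℝ))
      - (1 + (s * D : ℝ) * Complex.I - ((s * D) ^ 2 / 2 : ℝ) - (s ^ 2 * G / 2 : ℝ))
      = (E - (1 + (s * D : ℝ) * Complex.I - (s * D : ℝ) ^ 2 / 2)) - (E - 1) * (s ^ 2 * G / 2 : ℝ) := by
    push_cast; ring
  rw [this]
  refine (norm_sub_le _ _).trans ?_
  rw [norm_mul, Complex.norm_real, Real.norm_eq_abs, abs_div, abs_mul, abs_of_nonneg (sq_nonneg s),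
    abs_of_pos (by norm_num : (0 : ℝ) < 2)]
  unfold errI
  have h3 : ‖E - 1‖ * (s ^ 2 * |G| / 2) ≤ min 2 (s * |D|) * (s ^ 2 * |G| / 2) := by gcongr
  have h4 : 0 ≤ min 2 (s * |D|) * (s ^ 2 * |G| / 2) := by positivity
  nlinarith

theorem step_int {Y : Type*} [MeasurableSpace Y] {Q : Measure Y} [IsProbabilityMeasure Q]
    {D G : Y → ℝ} (hD : Measurable D) (hG : Measurable G) (hD2 : Integrable (fun y => D y ^ 2) Q)
    (hGi : Integrable G Q) (hD0 : ∫ y, D y ∂Q = 0) {s : ℝ} (hs : 0 ≤ s) :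
    ‖∫ y, Complex.exp ((s * D y : ℝ) * Complex.I) * (1 - (s ^ 2 * G y / 2 : ℝ)) ∂Q
      - ((1 - s ^ 2 / 2 * (∫ y, D y ^ 2 ∂Q + ∫ y, G y ∂Q) : ℝ) : ℂ)‖
      ≤ s ^ 2 * ∫ y, errI s (D y) (G y) ∂Q := by
  have hDi : Integrable D Q :=
    (memLp_two_iff_integrable_sq hD.aestronglyMeasurable).2 hD2 |>.integrable (by norm_num)
  have hbd : Integrable (fun y => 4 * D y ^ 2 + 2 * |G y|) Q :=
    (hD2.const_mul 4).add (hGi.abs.const_mul 2)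
  have herr : Integrable (fun y => errI s (D y) (G y)) Q := by
    refine hbd.mono' ?_ (ae_of_all _ fun y => ?_)
    · unfold errI; exact Measurable.aestronglyMeasurable (by fun_prop)
    · rw [Real.norm_of_nonneg (errI_nonneg hs _ _)]; exact errI_le _ _
  have hpoly : Integrable (fun y => ((1 : ℂ) + (s * D y : ℝ) * Complex.I - ((s * D y) ^ 2 / 2 : ℝ)
      - (s ^ 2 * G y / 2 : ℝ))) Q := by
    refine (((integrable_const _).add ((hDi.const_mul s).ofReal.mul_const _)).sub ?_).sub ?_
    · refine Integrable.ofReal ?_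
      simp_rw [mul_pow]
      exact (hD2.const_mul _).div_const _
    · exact ((hGi.const_mul _).div_const _).ofReal
  have hpi : ∫ y, ((1 : ℂ) + (s * D y : ℝ) * Complex.I - ((s * D y) ^ 2 / 2 : ℝ)
      - (s ^ 2 * G y / 2 : ℝ)) ∂Q
      = ((1 - s ^ 2 / 2 * (∫ y, D y ^ 2 ∂Q + ∫ y, G y ∂Q) : ℝ) : ℂ) := by
    have i1 : Integrable (fun y => ((s * D y : ℝ) : ℂ) * Complex.I) Q :=
      (hDi.const_mul s).ofReal.mul_const _
    have i2 : Integrable (fun y => (((s * D y) ^ 2 / 2 : ℝ) : ℂ)) Q := by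
      refine Integrable.ofReal ?_
      simp_rw [mul_pow]
      exact (hD2.const_mul _).div_const _
    have i3 : Integrable (fun y => ((s ^ 2 * G y / 2 : ℝ) : ℂ)) Q :=
      ((hGi.const_mul _).div_const _).ofReal
    have i4 : Integrable (fun y => (1 : ℂ) + ((s * D y : ℝ) : ℂ) * Complex.I) Q :=
      (integrable_const _).add i1
    have i5 : Integrable (fun y => (1 : ℂ) + ((s * D y : ℝ) : ℂ) * Complex.I
        - (((s * D y) ^ 2 / 2 : ℝ) : ℂ)) Q := i4.sub i2
    rw [integral_sub i5 i3, integral_sub i4 i2, integral_add (integrable_const _) i1,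
      integral_mul_const, integral_complex_ofReal, integral_complex_ofReal, integral_complex_ofReal, integral_const_mul, hD0]
    simp_rw [mul_pow]
    rw [integral_div, integral_div, integral_const_mul, integral_const_mul]
    simp
    ring
  have hexp : Integrable (fun y => Complex.exp ((s * D y : ℝ) * Complex.I)
      * (1 - (s ^ 2 * G y / 2 : ℝ))) Q := by
    refine Integrable.bdd_mul (c := 1) ((integrable_const _).sub
      ((hGi.const_mul _).div_const _).ofReal) ?_ (ae_of_all _ fun y => ?_)
    · exact Measurable.aestronglyMeasurable (by fun_prop)
    · rw [Complex.norm_exp_ofReal_mul_I]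
  rw [← hpi, ← integral_sub hexp hpoly, ← integral_const_mul]
  exact norm_integral_le_of_norm_le (herr.const_mul _) (ae_of_all _ fun y => step_pt hs _ _)

variable {X : Type*} [MeasurableSpace X] {P : Kernel X X} [IsMarkovKernel P] {V : X → ℝ}
  {K : Set X} {l b : ℝ} {μ π : Measure X} {Pμ : Measure (ℕ → X)}

/-- Hypotheses on the martingale increment. -/
structure Incr (P : Kernel X X) (V : X → ℝ) (D : X → X → ℝ) (C : ℝ) : Prop where
  meas : Measurable (Function.uncurry D)
  sq : ∀ x, Integrable (fun y => D x y ^ 2) (P x)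
  bd : ∀ x, ∫ y, D x y ^ 2 ∂(P x) ≤ C * V x
  mean : ∀ x, ∫ y, D x y ∂(P x) = 0

theorem Incr.measD {D : X → X → ℝ} {C : ℝ} (hD : Incr P V D C) (x : X) : Measurable (D x) :=
  hD.meas.comp (measurable_const.prodMk measurable_id)

theorem Incr.measg {D : X → X → ℝ} {C : ℝ} (hD : Incr P V D C) :
    Measurable (fun x => ∫ y, D x y ^ 2 ∂(P x)) := by
  have : StronglyMeasurable (fun z : X × X => (Function.uncurry D z) ^ 2) :=
    (hD.meas.pow_const 2).stronglyMeasurable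
  exact (this.integral_kernel_prod_right' (κ := P)).measurable

/-- averaged error -/
def errW (P : Kernel X X) (D : X → X → ℝ) (G : X → ℝ) (s : ℝ) (x : X) : ℝ :=
  ∫ y, errI s (D x y) (G y) ∂(P x)

theorem errW_int (h : DC P V K l b) {D : X → X → ℝ} {C : ℝ} (hD : Incr P V D C)
    {G : X → ℝ} (hG : VB V G) {s : ℝ} (hs : 0 ≤ s) (x : X) :
    Integrable (fun y => errI s (D x y) (G y)) (P x) := by
  have hbd : Integrable (fun y => 4 * D x y ^ 2 + 2 * |G y|) (P x) :=
    ((hD.sq x).const_mul 4).add ((hG.int h x).abs.const_mul 2)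
  have := hD.measD x
  have hGm := hG.1
  refine hbd.mono' ?_ (ae_of_all _ fun y => ?_)
  · unfold errI; exact Measurable.aestronglyMeasurable (by fun_prop)
  · rw [Real.norm_of_nonneg (errI_nonneg hs _ _)]; exact errI_le _ _

theorem errW_meas {D : X → X → ℝ} {C : ℝ} (hD : Incr P V D C)
    {G : X → ℝ} (hG : VB V G) (s : ℝ) : Measurable (errW P D G s) := by
  have hm := hD.meas
  have hGm : Measurable (fun z : X × X => G z.2) := hG.1.comp measurable_snd
  have : StronglyMeasurable (fun z : X × X => errI s (Function.uncurry D z) (G z.2)) := by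
    exact (errI_measurable hm hGm s).stronglyMeasurable
  exact (this.integral_kernel_prod_right' (κ := P)).measurable

theorem errW_bd (h : DC P V K l b) {D : X → X → ℝ} {C : ℝ} (hD : Incr P V D C)
    {G : X → ℝ} (hG : VB V G) {CG : ℝ} (hCG : 0 ≤ CG) (hGb : ∀ x, |G x| ≤ CG * V x)
    {s : ℝ} (hs : 0 ≤ s) (x : X) :
    errW P D G s x ≤ (4 * C + 2 * (CG * (l + b))) * V x := by
  have i2 : Integrable (fun y => |G y|) (P x) := (hG.int h x).abs
  have h1 : errW P D G s x ≤ ∫ y, (4 * D x y ^ 2 + 2 * |G y|) ∂(P x) :=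
    integral_mono (errW_int h hD hG hs x) (((hD.sq x).const_mul 4).add (i2.const_mul 2))
      fun y => errI_le _ _
  rw [integral_add ((hD.sq x).const_mul 4) (i2.const_mul 2), integral_const_mul,
    integral_const_mul] at h1
  have h2 : ∫ y, |G y| ∂(P x) ≤ ∫ y, CG * V y ∂(P x) :=
    integral_mono i2 ((h.int x).const_mul CG) hGb
  rw [integral_const_mul] at h2
  have h3 := mul_le_mul_of_nonneg_left (h.drift'' x) hCG
  have h4 := hD.bd x
  nlinarith

variable [IsProbabilityMeasure π] [IsProbabilityMeasure Pμ]

theorem errW_vanish (h : Erg P V K l b π μ Pμ) {D : X → X → ℝ} {C : ℝ} (hC : 0 ≤ C)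
    (hD : Incr P V D C) {G : X → ℝ} (hG : VB V G) :
    Tendsto (fun n : ℕ => (n : ℝ)⁻¹ * ∑ j ∈ Finset.range n,
      ∫ ω, errW P D G (√(n : ℝ))⁻¹ (ω j) ∂Pμ) atTop (𝓝 0) := by
  obtain ⟨-, CG, hCG, hGb⟩ := id hG
  have hl := h.dc.l0
  have hb0 := h.dc.b0
  have hs : ∀ n : ℕ, 0 ≤ (√(n : ℝ))⁻¹ := fun n => by positivity
  refine h.vanish (u := fun n => errW P D G (√(n : ℝ))⁻¹) (C := 4 * C + 2 * (CG * (l + b)))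
    (by positivity) (fun n => errW_meas hD hG _)
    (fun n x => integral_nonneg fun y => errI_nonneg (hs n) _ _)
    (fun n _ x => errW_bd h.dc hD hG hCG hGb (hs n) x) (fun m n hm hmn x => ?_) (fun x => ?_)
  · refine integral_mono (errW_int h.dc hD hG (hs n) x) (errW_int h.dc hD hG (hs m) x) fun y => ?_
    refine errI_mono ?_ _ _
    have : (0 : ℝ) < m := by exact_mod_cast hm
    gcongr
  · have hl : Tendsto (fun n : ℕ => (√(n : ℝ))⁻¹) atTop (𝓝 0) :=
      tendsto_inv_atTop_zero.comp (Real.tendsto_sqrt_atTop.comp tendsto_natCast_atTop_atTop)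
    have := tendsto_integral_of_dominated_convergence (μ := P x)
      (F := fun n : ℕ => fun y => errI (√(n : ℝ))⁻¹ (D x y) (G y)) (f := fun _ => 0)
      (fun y => 4 * D x y ^ 2 + 2 * |G y|)
      (fun n => (errW_int h.dc hD hG (hs n) x).aestronglyMeasurable)
      (((hD.sq x).const_mul 4).add ((hG.int h.dc x).abs.const_mul 2))
      (fun n => ae_of_all _ fun y => by
        rw [Real.norm_of_nonneg (errI_nonneg (hs n) _ _)]; exact errI_le _ _)
      (ae_of_all _ fun y => by
        have hc : Continuous (fun s : ℝ => errI s (D x y) (G y)) := by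
          unfold errI; fun_prop
        have := (hc.tendsto 0).comp hl
        simpa [errI, Function.comp_def] using this)
    simpa [errW] using this

/-- partial sums -/
def psum (D : X → X → ℝ) (j : ℕ) (ω : ℕ → X) : ℝ := ∑ k ∈ Finset.range j, D (ω k) (ω (k + 1))

/-- exponential of partial sums -/
def pexp (D : X → X → ℝ) (s : ℝ) (j : ℕ) (ω : ℕ → X) : ℂ :=
  Complex.exp ((s * psum D j ω : ℝ) * Complex.I)

theorem psum_meas {D : X → X → ℝ} (hD : Measurable (Function.uncurry D)) (j : ℕ) :
    Measurable (psum D j) := by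
  unfold psum
  refine Finset.measurable_sum _ fun k _ => ?_
  have : Measurable (fun ω : ℕ → X => (ω k, ω (k + 1))) :=
    (measurable_pi_apply k).prodMk (measurable_pi_apply (k + 1))
  exact hD.comp this

theorem pexp_meas {D : X → X → ℝ} (hD : Measurable (Function.uncurry D)) (s : ℝ) (j : ℕ) :
    Measurable (pexp D s j) := by
  have := psum_meas hD j
  unfold pexp
  fun_prop

theorem pexp_norm (D : X → X → ℝ) (s : ℝ) (j : ℕ) (ω : ℕ → X) : ‖pexp D s j ω‖ = 1 :=
  Complex.norm_exp_ofReal_mul_I _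

theorem pexp_past {D : X → X → ℝ} (hD : Measurable (Function.uncurry D)) (s : ℝ) (j : ℕ) :
    ∃ U : (Fin (j + 1) → X) → ℂ, Measurable U ∧ (∀ z, ‖U z‖ ≤ 1) ∧
      ∀ ω, pexp D s j ω = U (past j ω) := by
  refine ⟨fun z => Complex.exp ((s * ∑ k : Fin j, D (z k.castSucc) (z k.succ) : ℝ) * Complex.I),
    ?_, fun z => (Complex.norm_exp_ofReal_mul_I _).le, fun ω => ?_⟩
  · have : Measurable (fun z : Fin (j + 1) → X => ∑ k : Fin j, D (z k.castSucc) (z k.succ)) := by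
      refine Finset.measurable_sum _ fun k _ => ?_
      have : Measurable (fun z : Fin (j + 1) → X => (z k.castSucc, z k.succ)) :=
        (measurable_pi_apply k.castSucc).prodMk (measurable_pi_apply k.succ)
      exact hD.comp this
    fun_prop
  · simp [pexp, psum, past, Finset.sum_range]

/-- corrected expectation -/
def cexpt (Pμ : Measure (ℕ → X)) (D : X → X → ℝ) (G : X → ℝ) (s : ℝ) (j : ℕ) : ℂ :=
  ∫ ω, pexp D s j ω * (1 - (s ^ 2 * G (ω j) / 2 : ℝ)) ∂Pμ

theorem cexpt_step (h : Erg P V K l b π μ Pμ) {D : X → X → ℝ} {C : ℝ}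
    (hD : Incr P V D C) {G : X → ℝ} (hG : VB V G) {CG : ℝ} (hCG : 0 ≤ CG)
    (hGb : ∀ x, |G x| ≤ CG * V x) {ε v : ℝ} (hv : 0 ≤ v)
    (hq : ∀ x, |(∫ y, D x y ^ 2 ∂(P x)) - v - (G x - TT P G x)| ≤ ε * V x)
    {s : ℝ} (hs : 0 ≤ s) (hC : 0 ≤ C) (j : ℕ) :
    ‖cexpt Pμ D G s (j + 1) - (1 - s ^ 2 * v / 2 : ℝ) * cexpt Pμ D G s j‖
      ≤ s ^ 2 * (ε * ∫ ω, V (ω j) ∂Pμ + ∫ ω, errW P D G s (ω j) ∂Pμ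
        + s ^ 2 * (v * CG) * ∫ ω, V (ω j) ∂Pμ) := by
  obtain ⟨U, hU, hU1, hUe⟩ := pexp_past hD.meas s j
  have hGm := hG.1
  set H : X × X → ℂ := fun z => Complex.exp ((s * Function.uncurry D z : ℝ) * Complex.I)
      * (1 - (s ^ 2 * G z.2 / 2 : ℝ)) with hH
  have hHm : Measurable H := by
    have := hD.meas
    have hGm2 : Measurable (fun z : X × X => G z.2) := hG.1.comp measurable_snd
    fun_prop
  have iG : ∀ j, Integrable (fun ω : ℕ → X => (1 - (s ^ 2 * G (ω j) / 2 : ℝ) : ℂ)) Pμ := fun j =>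
    (integrable_const _).sub (((h.int hG j).const_mul _).div_const _).ofReal
  have hHi : Integrable (fun ω : ℕ → X => H (ω j, ω (j + 1))) Pμ := by
    refine Integrable.bdd_mul (c := 1) (iG (j + 1)) ?_ (ae_of_all _ fun y => ?_)
    · have : Measurable (fun ω : ℕ → X => Function.uncurry D (ω j, ω (j + 1))) :=
        hD.meas.comp ((measurable_pi_apply j).prodMk (measurable_pi_apply (j + 1)))
      exact (cexp_measurable this s).aestronglyMeasurable
    · rw [Complex.norm_exp_ofReal_mul_I]
  have e1 : cexpt Pμ D G s (j + 1) = ∫ ω, U (past j ω) * ∫ y, H (ω j, y) ∂(P (ω j)) ∂Pμ := by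
    rw [← chain_mul h.chain j hU hU1 hHm hHi]
    refine integral_congr_ae (ae_of_all _ fun ω => ?_)
    simp only [← hUe, hH, Function.uncurry, pexp, psum, Finset.sum_range_succ]
    rw [← mul_assoc, ← Complex.exp_add]
    congr 2
    push_cast; ring
  have hUm : AEStronglyMeasurable (fun ω => U (past j ω)) Pμ :=
    (hU.comp (measurable_past j)).aestronglyMeasurable
  have e2 : (1 - s ^ 2 * v / 2 : ℝ) * cexpt Pμ D G s j
      = ∫ ω, U (past j ω) * ((1 - s ^ 2 * v / 2 : ℝ) * (1 - (s ^ 2 * G (ω j) / 2 : ℝ))) ∂Pμ := by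
    unfold cexpt
    rw [← integral_const_mul]
    refine integral_congr_ae (ae_of_all _ fun ω => ?_)
    simp only [← hUe]; ring
  set B : X → ℝ := fun x => s ^ 2 * (ε * V x + errW P D G s x + s ^ 2 * (v * CG) * V x) with hB
  have hR : ∀ x, ‖∫ y, H (x, y) ∂(P x) - (1 - s ^ 2 * v / 2 : ℝ) * (1 - (s ^ 2 * G x / 2 : ℝ))‖
      ≤ B x := by
    intro x
    have h1 := step_int (Q := P x) (hD.measD x) hGm (hD.sq x) (hG.int h.dc x) (hD.mean x) hs
    have h2 := hq x
    have h3 : (((1 - s ^ 2 / 2 * (∫ y, D x y ^ 2 ∂(P x) + ∫ y, G y ∂(P x)) : ℝ) : ℂ)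
        - (1 - s ^ 2 * v / 2 : ℝ) * (1 - (s ^ 2 * G x / 2 : ℝ)))
        = (((- (s ^ 2 / 2) * ((∫ y, D x y ^ 2 ∂(P x)) - v - (G x - TT P G x))
          - s ^ 2 * s ^ 2 * v * G x / 4) : ℝ) : ℂ) := by
      unfold TT; push_cast; ring
    have h4 : ‖(((- (s ^ 2 / 2) * ((∫ y, D x y ^ 2 ∂(P x)) - v - (G x - TT P G x))
          - s ^ 2 * s ^ 2 * v * G x / 4) : ℝ) : ℂ)‖ ≤ s ^ 2 * (ε * V x) + s ^ 2 * (s ^ 2 * (v * CG) * V x) := by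
      rw [Complex.norm_real, Real.norm_eq_abs]
      refine (abs_sub _ _).trans ?_
      have a1 : |(- (s ^ 2 / 2) * ((∫ y, D x y ^ 2 ∂(P x)) - v - (G x - TT P G x)))|
          ≤ s ^ 2 * (ε * V x) := by
        rw [abs_mul, abs_neg, abs_of_nonneg (by positivity)]
        have := mul_le_mul_of_nonneg_left h2 (sq_nonneg s)
        have h5 := mul_nonneg (sq_nonneg s) (abs_nonneg ((∫ y, D x y ^ 2 ∂(P x)) - v - (G x - TT P G x)))
        linarith
      have a2 : |s ^ 2 * s ^ 2 * v * G x / 4| ≤ s ^ 2 * (s ^ 2 * (v * CG) * V x) := by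
        rw [abs_div, abs_mul, abs_of_nonneg (by positivity : 0 ≤ s ^ 2 * s ^ 2 * v)]
        have := mul_le_mul_of_nonneg_left (hGb x) (by positivity : 0 ≤ s ^ 2 * s ^ 2 * v)
        have h5 := mul_nonneg (by positivity : 0 ≤ s ^ 2 * s ^ 2 * v) (abs_nonneg (G x))
        rw [abs_of_pos (by norm_num : (0 : ℝ) < 4)]
        linarith
      linarith
    have h6 : ∫ y, H (x, y) ∂(P x) - (1 - s ^ 2 * v / 2 : ℝ) * (1 - (s ^ 2 * G x / 2 : ℝ))
        = (∫ y, H (x, y) ∂(P x) - ((1 - s ^ 2 / 2 * (∫ y, D x y ^ 2 ∂(P x) + ∫ y, G y ∂(P x)) : ℝ) : ℂ))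
        + (((1 - s ^ 2 / 2 * (∫ y, D x y ^ 2 ∂(P x) + ∫ y, G y ∂(P x)) : ℝ) : ℂ)
        - (1 - s ^ 2 * v / 2 : ℝ) * (1 - (s ^ 2 * G x / 2 : ℝ))) := by ring
    rw [h6]
    refine (norm_add_le _ _).trans ?_
    rw [h3]
    have h7 : B x = s ^ 2 * errW P D G s x
        + (s ^ 2 * (ε * V x) + s ^ 2 * (s ^ 2 * (v * CG) * V x)) := by
      simp only [hB]; ring
    rw [h7]
    exact add_le_add h1 h4
  have hl := h.dc.l0
  have hb0 := h.dc.b0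
  have hWV : VB V (errW P D G s) := ⟨errW_meas hD hG s, 4 * C + 2 * (CG * (l + b)), by positivity,
    fun x => by
      rw [abs_of_nonneg (show 0 ≤ errW P D G s x from integral_nonneg fun y => errI_nonneg hs _ _)]
      exact errW_bd h.dc hD hG hCG hGb hs x⟩
  have iB1 : Integrable (fun ω : ℕ → X => ε * V (ω j) + errW P D G s (ω j)) Pμ :=
    ((h.intV j).const_mul ε).add (h.int hWV j)
  have iB2 : Integrable (fun ω : ℕ → X => s ^ 2 * (v * CG) * V (ω j)) Pμ := (h.intV j).const_mul _
  have iB : Integrable (fun ω : ℕ → X => B (ω j)) Pμ := (iB1.add iB2).const_mul _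
  have hHHm : StronglyMeasurable (fun x => ∫ y, H (x, y) ∂(P x)) :=
    hHm.stronglyMeasurable.integral_kernel_prod_right' (κ := P)
  have iHi : Integrable (fun ω : ℕ → X => (1 - s ^ 2 * v / 2 : ℝ) * (1 - (s ^ 2 * G (ω j) / 2 : ℝ) : ℂ)) Pμ :=
    (iG j).const_mul _
  have iHH : Integrable (fun ω : ℕ → X => ∫ y, H (ω j, y) ∂(P (ω j))) Pμ := by
    have : Integrable (fun ω : ℕ → X => (∫ y, H (ω j, y) ∂(P (ω j))
        - (1 - s ^ 2 * v / 2 : ℝ) * (1 - (s ^ 2 * G (ω j) / 2 : ℝ) : ℂ))) Pμ := by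
      refine iB.mono' ?_ (ae_of_all _ fun ω => hR (ω j))
      exact (hHHm.comp_measurable (measurable_pi_apply j)).aestronglyMeasurable.sub
        iHi.aestronglyMeasurable
    have h2 := this.add iHi
    refine h2.congr (ae_of_all _ fun ω => ?_)
    simp
  rw [e1, e2, ← integral_sub (iHH.bdd_mul (c := 1) hUm (ae_of_all _ fun ω => hU1 _))
    (iHi.bdd_mul (c := 1) hUm (ae_of_all _ fun ω => hU1 _))]
  have e3 : s ^ 2 * (ε * ∫ ω, V (ω j) ∂Pμ + ∫ ω, errW P D G s (ω j) ∂Pμ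
        + s ^ 2 * (v * CG) * ∫ ω, V (ω j) ∂Pμ) = ∫ ω, B (ω j) ∂Pμ := by
    simp only [hB]
    rw [integral_const_mul, integral_add iB1 iB2, integral_add ((h.intV j).const_mul ε) (h.int hWV j),
      integral_const_mul, integral_const_mul]
  rw [e3]
  refine norm_integral_le_of_norm_le iB (ae_of_all _ fun ω => ?_)
  rw [← mul_sub, norm_mul]
  calc _ ≤ 1 * B (ω j) := mul_le_mul (hU1 _) (hR _) (norm_nonneg _) zero_le_one
    _ = _ := one_mul _

theorem recur_bound {c : ℕ → ℂ} {ρ : ℂ} (hρ : ‖ρ‖ ≤ 1) {r : ℕ → ℝ}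
    (h : ∀ j, ‖c (j + 1) - ρ * c j‖ ≤ r j) (n : ℕ) :
    ‖c n - ρ ^ n * c 0‖ ≤ ∑ j ∈ Finset.range n, r j := by
  induction n with
  | zero => simp
  | succ n ih =>
    rw [Finset.sum_range_succ]
    have : c (n + 1) - ρ ^ (n + 1) * c 0 = ρ * (c n - ρ ^ n * c 0) + (c (n + 1) - ρ * c n) := by ring
    rw [this]
    refine (norm_add_le _ _).trans (add_le_add ?_ (h n))
    rw [norm_mul]
    calc _ ≤ 1 * _ := mul_le_mul hρ ih (norm_nonneg _) zero_le_one
      _ = _ := one_mul _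

theorem cexpt_close (h : Erg P V K l b π μ Pμ) {D : X → X → ℝ} 
    (hD : Measurable (Function.uncurry D)) {G : X → ℝ} (hG : VB V G) {CG C0 : ℝ} (hCG : 0 ≤ CG)
    (hGb : ∀ x, |G x| ≤ CG * V x) (hC0 : ∀ j, ∫ ω, V (ω j) ∂Pμ ≤ C0) (s : ℝ) (j : ℕ) :
    ‖∫ ω, pexp D s j ω ∂Pμ - cexpt Pμ D G s j‖ ≤ s ^ 2 * (CG * C0) := by
  have iG : Integrable (fun ω : ℕ → X => (1 - (s ^ 2 * G (ω j) / 2 : ℝ) : ℂ)) Pμ :=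
    (integrable_const _).sub (((h.int hG j).const_mul _).div_const _).ofReal
  have i1 : Integrable (fun ω : ℕ → X => pexp D s j ω * (1 - (s ^ 2 * G (ω j) / 2 : ℝ))) Pμ :=
    iG.bdd_mul (c := 1) (pexp_meas hD s j).aestronglyMeasurable
      (ae_of_all _ fun ω => (pexp_norm _ _ _ _).le)
  have i2 : Integrable (pexp D s j) Pμ := (integrable_const (1 : ℝ)).mono'
    (pexp_meas hD s j).aestronglyMeasurable (ae_of_all _ fun ω => (pexp_norm _ _ _ _).le)
  unfold cexpt
  rw [← integral_sub i2 i1]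
  have h1 : ∫ ω, s ^ 2 * (CG * V (ω j)) ∂Pμ ≤ s ^ 2 * (CG * C0) := by
    rw [integral_const_mul, integral_const_mul]
    have := hC0 j
    gcongr
  refine le_trans (norm_integral_le_of_norm_le (((h.intV j).const_mul CG).const_mul (s ^ 2))
    (ae_of_all _ fun ω => ?_)) h1
  have : pexp D s j ω - pexp D s j ω * (1 - (s ^ 2 * G (ω j) / 2 : ℝ))
      = pexp D s j ω * (s ^ 2 * G (ω j) / 2 : ℝ) := by ring
  rw [this, norm_mul, pexp_norm, one_mul, Complex.norm_real, Real.norm_eq_abs, abs_div, abs_mul,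
    abs_of_nonneg (sq_nonneg s), abs_of_pos (by norm_num : (0 : ℝ) < 2)]
  have h2 := mul_le_mul_of_nonneg_left (hGb (ω j)) (sq_nonneg s)
  have h5 := mul_nonneg (sq_nonneg s) (abs_nonneg (G (ω j)))
  linarith

theorem clt_one (h : Erg P V K l b π μ Pμ) {D : X → X → ℝ} {C : ℝ} (hC : 0 ≤ C)
    (hD : Incr P V D C) :
    Tendsto (fun n : ℕ => ∫ ω, pexp D (√(n : ℝ))⁻¹ n ω ∂Pμ) atTop
      (𝓝 (Complex.exp (-((∫ x, ∫ y, D x y ^ 2 ∂(P x) ∂π : ℝ) : ℂ) / 2))) := by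
  obtain ⟨C0, hC00, hC0⟩ := h.bdd
  set g : X → ℝ := fun x => ∫ y, D x y ^ 2 ∂(P x) with hg
  have hg0 : ∀ x, 0 ≤ g x := fun x => integral_nonneg fun y => sq_nonneg _
  have hgV : VB V g := ⟨hD.measg, C, hC, fun x => by rw [abs_of_nonneg (hg0 x)]; exact hD.bd x⟩
  set v : ℝ := ∫ x, g x ∂π with hvd
  have hv : 0 ≤ v := integral_nonneg hg0
  have hz : ∫ x, (g x - v) ∂π = 0 := by
    rw [integral_sub (hgV.integrable h.piV) (integrable_const v)]; simp [hvd]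
  rw [Metric.tendsto_atTop]
  intro ε hε
  obtain ⟨G, hG, hq⟩ := h.cob _ (hgV.sub (h.dc.vbc v)) hz (ε / (4 * (C0 + 1))) (by positivity)
  obtain ⟨-, CG, hCG, hGb⟩ := id hG
  have l1 := errW_vanish h hC hD hG
  have l2 : Tendsto (fun n : ℕ => (n : ℝ)⁻¹) atTop (𝓝 0) := tendsto_inv_atTop_nhds_zero_nat
  have l3 : Tendsto (fun n : ℕ => ‖(1 + (-(v : ℂ) / 2) / n) ^ n - Complex.exp (-(v : ℂ) / 2)‖) atTop (𝓝 0) :=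
    tendsto_iff_norm_sub_tendsto_zero.1 (Complex.tendsto_one_add_div_pow_exp (-(v : ℂ) / 2))
  have l4 := (l1.add (l2.mul_const (v * CG * C0 + 2 * (CG * C0)))).add l3
  simp only [zero_mul, add_zero] at l4
  obtain ⟨n0, hn0⟩ := eventually_atTop.1 (l4.eventually (gt_mem_nhds (half_pos hε)))
  obtain ⟨n1, hn1⟩ := exists_nat_ge v
  refine ⟨n0 + n1 + 1, fun n hn => ?_⟩
  have hlt := hn0 n (by omega)
  have hnpos : (0 : ℝ) < n := by
    have : 0 < n := by omega
    exact_mod_cast this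
  have hvn : v ≤ n := hn1.trans (by exact_mod_cast (by omega : n1 ≤ n))
  set s : ℝ := (√(n : ℝ))⁻¹ with hs
  have hs0 : 0 ≤ s := by positivity
  have hs2 : s ^ 2 = (n : ℝ)⁻¹ := by rw [hs, inv_pow, Real.sq_sqrt hnpos.le]
  have hstep := cexpt_step h hD hG hCG hGb hv hq hs0 hC
  have hρ : ‖((1 - s ^ 2 * v / 2 : ℝ) : ℂ)‖ ≤ 1 := by
    rw [Complex.norm_real, Real.norm_eq_abs, hs2, abs_le]
    have : (n : ℝ)⁻¹ * v ≤ 1 := by rw [inv_mul_le_iff₀ hnpos]; linarith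
    have : 0 ≤ (n : ℝ)⁻¹ * v := by positivity
    constructor <;> linarith
  have hrec := recur_bound hρ hstep n
  have hsum : ∑ j ∈ Finset.range n, s ^ 2 * (ε / (4 * (C0 + 1)) * ∫ ω, V (ω j) ∂Pμ
      + ∫ ω, errW P D G s (ω j) ∂Pμ + s ^ 2 * (v * CG) * ∫ ω, V (ω j) ∂Pμ)
      ≤ ε / 4 + (n : ℝ)⁻¹ * ∑ j ∈ Finset.range n, ∫ ω, errW P D G s (ω j) ∂Pμ
        + (n : ℝ)⁻¹ * (v * CG * C0) := by
    have hb : ∀ j ∈ Finset.range n, s ^ 2 * (ε / (4 * (C0 + 1)) * ∫ ω, V (ω j) ∂Pμ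
      + ∫ ω, errW P D G s (ω j) ∂Pμ + s ^ 2 * (v * CG) * ∫ ω, V (ω j) ∂Pμ)
      ≤ (n : ℝ)⁻¹ * (ε / 4 + (n : ℝ)⁻¹ * (v * CG * C0)) + (n : ℝ)⁻¹ * ∫ ω, errW P D G s (ω j) ∂Pμ := by
      intro j _
      rw [hs2]
      have b1 : ε / (4 * (C0 + 1)) * ∫ ω, V (ω j) ∂Pμ ≤ ε / 4 := by
        refine (mul_le_mul_of_nonneg_left (hC0 j) (by positivity)).trans ?_
        rw [div_mul_eq_mul_div, div_le_div_iff₀ (by positivity) (by positivity)]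
        nlinarith
      have b2 : (n : ℝ)⁻¹ * (v * CG) * ∫ ω, V (ω j) ∂Pμ ≤ (n : ℝ)⁻¹ * (v * CG * C0) := by
        rw [mul_assoc]
        have := hC0 j
        gcongr
      rw [← mul_add]
      refine mul_le_mul_of_nonneg_left ?_ (by positivity)
      linarith
    refine (Finset.sum_le_sum hb).trans ?_
    rw [Finset.sum_add_distrib, ← Finset.mul_sum (f := fun j => ∫ ω, errW P D G s (ω j) ∂Pμ), Finset.sum_const, Finset.card_range, nsmul_eq_mul]
    rw [← mul_assoc, mul_inv_cancel₀ hnpos.ne']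
    linarith
  have hc1 := cexpt_close h hD.meas hG hCG hGb hC0 s n
  have hc2 := cexpt_close h hD.meas hG hCG hGb hC0 s 0
  have e0 : ∫ ω, pexp D s 0 ω ∂Pμ = 1 := by simp [pexp, psum]
  rw [e0] at hc2
  rw [hs2] at hc1 hc2
  have hρe : ((1 - s ^ 2 * v / 2 : ℝ) : ℂ) = 1 + (-(v : ℂ) / 2) / n := by
    rw [hs2]; push_cast; ring
  have hc3 : ‖((1 - s ^ 2 * v / 2 : ℝ) : ℂ) ^ n * (cexpt Pμ D G s 0 - 1)‖ ≤ (n : ℝ)⁻¹ * (CG * C0) := by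
    rw [norm_mul, norm_pow, ← norm_neg (cexpt Pμ D G s 0 - 1), neg_sub]
    calc _ ≤ 1 * _ := mul_le_mul (pow_le_one₀ (norm_nonneg _) hρ) hc2 (norm_nonneg _) zero_le_one
      _ = _ := one_mul _
  rw [dist_eq_norm]
  have hdec : ∫ ω, pexp D s n ω ∂Pμ - Complex.exp (-(v : ℂ) / 2)
      = (∫ ω, pexp D s n ω ∂Pμ - cexpt Pμ D G s n)
        + (cexpt Pμ D G s n - ((1 - s ^ 2 * v / 2 : ℝ) : ℂ) ^ n * cexpt Pμ D G s 0)
        + ((1 - s ^ 2 * v / 2 : ℝ) : ℂ) ^ n * (cexpt Pμ D G s 0 - 1)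
        + ((1 + (-(v : ℂ) / 2) / n) ^ n - Complex.exp (-(v : ℂ) / 2)) := by
    rw [hρe]; ring
  rw [hdec]
  refine (norm_add_le _ _).trans_lt ?_
  have t1 := norm_add₃_le (a := ∫ ω, pexp D s n ω ∂Pμ - cexpt Pμ D G s n)
    (b := cexpt Pμ D G s n - ((1 - s ^ 2 * v / 2 : ℝ) : ℂ) ^ n * cexpt Pμ D G s 0)
    (c := ((1 - s ^ 2 * v / 2 : ℝ) : ℂ) ^ n * (cexpt Pμ D G s 0 - 1))
  have hh := hrec.trans hsum
  linarith

end clt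

section vec

variable {X : Type*} [MeasurableSpace X] {P : Kernel X X} [IsMarkovKernel P] {V : X → ℝ}
  {K : Set X} {l b : ℝ} {μ π : Measure X} {Pμ : Measure (ℕ → X)} {k : ℕ}

/-- linear combination of increments -/
def comb (E : Fin k → X → X → ℝ) (t : Fin k → ℝ) (x y : X) : ℝ := ∑ i, t i * E i x y

theorem Incr.memLp {D : X → X → ℝ} {C : ℝ} (hD : Incr P V D C) (x : X) :
    MemLp (D x) 2 (P x) :=
  (memLp_two_iff_integrable_sq (hD.measD x).aestronglyMeasurable).2 (hD.sq x)

theorem Incr.integrable {D : X → X → ℝ} {C : ℝ} (hD : Incr P V D C) (x : X) :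
    Integrable (D x) (P x) := (hD.memLp x).integrable (by norm_num)

theorem comb_incr {E : Fin k → X → X → ℝ} {Cc : ℝ}
    (hE : ∀ i, Incr P V (E i) Cc) (t : Fin k → ℝ) :
    Incr P V (comb E t) (k * ∑ i, t i ^ 2 * Cc) := by
  have hm : ∀ x, MemLp (comb E t x) 2 (P x) := fun x => by
    unfold comb
    exact memLp_finsetSum _ fun i _ => ((hE i).memLp x).const_mul (t i)
  have hsq : ∀ x, Integrable (fun y => comb E t x y ^ 2) (P x) := fun x => (hm x).integrable_sq
  refine ⟨?_, hsq, fun x => ?_, fun x => ?_⟩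
  · have : Function.uncurry (comb E t) = fun z => ∑ i, t i * Function.uncurry (E i) z := by
      ext ⟨x, y⟩; rfl
    rw [this]
    exact Finset.measurable_sum _ fun i _ => (hE i).meas.const_mul (t i)
  · have i1 : ∀ i ∈ Finset.univ, Integrable (fun y => t i ^ 2 * E i x y ^ 2) (P x) :=
      fun i _ => ((hE i).sq x).const_mul _
    calc ∫ y, comb E t x y ^ 2 ∂(P x) ≤ ∫ y, k * ∑ i, t i ^ 2 * E i x y ^ 2 ∂(P x) := by
          refine integral_mono (hsq x) ((integrable_finsetSum _ i1).const_mul _) fun y => ?_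
          have := sq_sum_le_card_mul_sum_sq (s := (Finset.univ : Finset (Fin k)))
            (f := fun i => t i * E i x y)
          simpa [comb, mul_pow] using this
      _ = k * ∑ i, t i ^ 2 * ∫ y, E i x y ^ 2 ∂(P x) := by
          rw [integral_const_mul, integral_finsetSum _ i1]
          simp_rw [integral_const_mul]
      _ ≤ k * ∑ i, t i ^ 2 * (Cc * V x) := by
          gcongr with i _
          exact (hE i).bd x
      _ = _ := by
          rw [mul_assoc, Finset.sum_mul]
          simp_rw [mul_assoc]
  · unfold comb
    rw [integral_finsetSum _ fun i _ => ((hE i).integrable x).const_mul (t i)]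
    simp_rw [integral_const_mul, (hE _).mean]
    simp

theorem cross_int {D D' : X → X → ℝ} {Cc : ℝ} (hD : Incr P V D Cc) (hD' : Incr P V D' Cc) (x : X) :
    Integrable (fun y => D x y * D' x y) (P x) := (hD.memLp x).integrable_mul (hD'.memLp x)

theorem cross_VB {D D' : X → X → ℝ} {Cc : ℝ} (hC : 0 ≤ Cc)
    (hD : Incr P V D Cc) (hD' : Incr P V D' Cc) :
    VB V (fun x => ∫ y, D x y * D' x y ∂(P x)) := by
  refine ⟨?_, Cc, hC, fun x => ?_⟩
  · have : StronglyMeasurable (fun z : X × X => Function.uncurry D z * Function.uncurry D' z) :=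
      (hD.meas.mul hD'.meas).stronglyMeasurable
    exact (this.integral_kernel_prod_right' (κ := P)).measurable
  · refine abs_integral_le_integral_abs.trans ?_
    have i2 : Integrable (fun y => (D x y ^ 2 + D' x y ^ 2) / 2) (P x) :=
      ((hD.sq x).add (hD'.sq x)).div_const 2
    refine (integral_mono (cross_int hD hD' x).abs i2 fun y => ?_).trans ?_
    · simp only
      rw [abs_mul]
      nlinarith [sq_nonneg (|D x y| - |D' x y|), sq_abs (D x y), sq_abs (D' x y)]
    · rw [integral_div, integral_add (hD.sq x) (hD'.sq x)]
      linarith [hD.bd x, hD'.bd x]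

theorem comb_var (hpiV : Integrable V π) {E : Fin k → X → X → ℝ} {Cc : ℝ} (hC : 0 ≤ Cc)
    (hE : ∀ i, Incr P V (E i) Cc) (t : Fin k → ℝ) :
    ∫ x, ∫ y, comb E t x y ^ 2 ∂(P x) ∂π
      = ∑ i, ∑ j, t i * t j * ∫ x, ∫ y, E i x y * E j x y ∂(P x) ∂π := by
  have e1 : ∀ x, ∫ y, comb E t x y ^ 2 ∂(P x)
      = ∑ i, ∑ j, t i * t j * ∫ y, E i x y * E j x y ∂(P x) := by
    intro x
    have : ∀ y, comb E t x y ^ 2 = ∑ i, ∑ j, t i * t j * (E i x y * E j x y) := by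
      intro y
      unfold comb
      rw [sq, Finset.sum_mul_sum]
      refine Finset.sum_congr rfl fun i _ => Finset.sum_congr rfl fun j _ => by ring
    simp_rw [this]
    rw [integral_finsetSum _ fun i _ => integrable_finsetSum _ fun j _ =>
      (cross_int (hE i) (hE j) x).const_mul _]
    refine Finset.sum_congr rfl fun i _ => ?_
    rw [integral_finsetSum _ fun j _ => (cross_int (hE i) (hE j) x).const_mul _]
    simp_rw [integral_const_mul]
  simp_rw [e1]
  rw [integral_finsetSum _ fun i _ => integrable_finsetSum _ fun j _ =>
      ((cross_VB hC (hE i) (hE j)).integrable hpiV).const_mul _]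
  refine Finset.sum_congr rfl fun i _ => ?_
  rw [integral_finsetSum _ fun j _ => ((cross_VB hC (hE i) (hE j)).integrable hpiV).const_mul _]
  simp_rw [integral_const_mul]

theorem psum_comb (E : Fin k → X → X → ℝ) (t : Fin k → ℝ) (n : ℕ) (ω : ℕ → X) :
    psum (comb E t) n ω = ∑ i, t i * psum (E i) n ω := by
  unfold psum comb
  rw [Finset.sum_comm]
  simp_rw [Finset.mul_sum]

/-- The Gaussian limit law. -/
theorem gauss_charFun (C : Matrix (Fin k) (Fin k) ℝ) (t : EuclideanSpace ℝ (Fin k)) :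
    charFun ((Measure.pi fun _ : Fin k => gaussianReal 0 1).map
      (fun w => (WithLp.toLp 2 (C.mulVec w) : EuclideanSpace ℝ (Fin k)))) t
      = Complex.exp (-((∑ i, ∑ j, t i * t j * (C * C.transpose) i j : ℝ) : ℂ) / 2) := by
  have hm : Measurable (fun w => (WithLp.toLp 2 (C.mulVec w) : EuclideanSpace ℝ (Fin k))) := by
    refine Continuous.measurable ?_
    refine (PiLp.continuous_toLp 2 _).comp ?_
    exact Continuous.matrix_mulVec continuous_const continuous_id
  have hm2 : Measurable (WithLp.toLp 2 : (Fin k → ℝ) → EuclideanSpace ℝ (Fin k)) :=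
    (PiLp.continuous_toLp 2 _).measurable
  have h1 := charFun_pi (μ := fun _ : Fin k => gaussianReal 0 1)
    (WithLp.toLp 2 (Matrix.vecMul t.ofLp C) : EuclideanSpace ℝ (Fin k))
  rw [charFun_apply, integral_map hm2.aemeasurable (Measurable.aestronglyMeasurable (by fun_prop))] at h1
  rw [charFun_apply, integral_map hm.aemeasurable (Measurable.aestronglyMeasurable (by fun_prop))]
  have e : ∀ w : Fin k → ℝ, inner ℝ (WithLp.toLp 2 (C.mulVec w) : EuclideanSpace ℝ (Fin k)) t
      = inner ℝ (WithLp.toLp 2 w : EuclideanSpace ℝ (Fin k))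
        (WithLp.toLp 2 (Matrix.vecMul t.ofLp C) : EuclideanSpace ℝ (Fin k)) := by
    intro w
    have := Matrix.dotProduct_mulVec t.ofLp C w
    simpa [PiLp.inner_apply, dotProduct, mul_comm] using this
  simp_rw [e]
  rw [h1]
  simp_rw [charFun_gaussianReal]
  rw [← Complex.exp_sum]
  congr 1
  have e2 : ∑ i, ∑ j, t i * t j * (C * C.transpose) i j = ∑ a, (Matrix.vecMul t.ofLp C a) ^ 2 := by
    simp only [Matrix.mul_apply, Matrix.transpose_apply, Matrix.vecMul, dotProduct, sq,
      Finset.mul_sum]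
    have : ∀ i, ∑ j, ∑ a, t i * t j * (C i a * C j a) = ∑ a, ∑ j, t i * t j * (C i a * C j a) :=
      fun i => Finset.sum_comm
    simp_rw [this]
    rw [Finset.sum_comm]
    refine Finset.sum_congr rfl fun a _ => Finset.sum_congr rfl fun i _ => ?_
    rw [Finset.sum_mul]
    exact Finset.sum_congr rfl fun j _ => by ring
  rw [e2]
  push_cast
  rw [neg_div, Finset.sum_div, ← Finset.sum_neg_distrib]
  refine Finset.sum_congr rfl fun a _ => ?_
  simp

theorem exp_lip (a c : ℝ) : ‖Complex.exp (a * Complex.I) - Complex.exp (c * Complex.I)‖ ≤ |a - c| := by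
  have : Complex.exp (a * Complex.I) - Complex.exp (c * Complex.I)
      = Complex.exp (c * Complex.I) * (Complex.exp ((a - c : ℝ) * Complex.I) - 1) := by
    rw [mul_sub, ← Complex.exp_add]
    congr 2
    · push_cast; ring
    · ring
  rw [this, norm_mul, Complex.norm_exp_ofReal_mul_I, one_mul]
  exact (exp_sub_one _).trans (min_le_right _ _)

variable [IsProbabilityMeasure π] [IsProbabilityMeasure Pμ]

theorem vec_clt (h : Erg P V K l b π μ Pμ) {E : Fin k → X → X → ℝ} {Cc : ℝ} (hC : 0 ≤ Cc)
    (hE : ∀ i, Incr P V (E i) Cc) (Cm : Matrix (Fin k) (Fin k) ℝ)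
    (hCm : ∀ i j, (Cm * Cm.transpose) i j = ∫ x, ∫ y, E i x y * E j x y ∂(P x) ∂π)
    {Y r : ℕ → (ℕ → X) → Fin k → ℝ} (hY : ∀ n, Measurable (Y n))
    (hYr : ∀ n, 1 ≤ n → ∀ ω i, Y n ω i = (√(n : ℝ))⁻¹ * psum (E i) n ω + r n ω i)
    (hri : ∀ n i, Integrable (fun ω => r n ω i) Pμ)
    (hr : ∀ i, Tendsto (fun n => ∫ ω, |r n ω i| ∂Pμ) atTop (𝓝 0))
    (φ : BoundedContinuousFunction (Fin k → ℝ) ℝ) :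
    Tendsto (fun n => ∫ ω, φ (Y n ω) ∂Pμ) atTop
      (𝓝 (∫ w, φ (Cm.mulVec w) ∂(Measure.pi fun _ : Fin k => gaussianReal 0 1))) := by
  have hto : Continuous (WithLp.toLp 2 : (Fin k → ℝ) → EuclideanSpace ℝ (Fin k)) :=
    PiLp.continuous_toLp 2 _
  have hof : Continuous (WithLp.ofLp : EuclideanSpace ℝ (Fin k) → (Fin k → ℝ)) :=
    PiLp.continuous_ofLp 2 _
  have hm : Continuous (fun w => (WithLp.toLp 2 (Cm.mulVec w) : EuclideanSpace ℝ (Fin k))) := by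
    refine hto.comp ?_
    exact Continuous.matrix_mulVec continuous_const continuous_id
  have hYm : ∀ n, Measurable (fun ω => (WithLp.toLp 2 (Y n ω) : EuclideanSpace ℝ (Fin k))) :=
    fun n => hto.measurable.comp (hY n)
  set ν : ℕ → ProbabilityMeasure (EuclideanSpace ℝ (Fin k)) := fun n =>
    ⟨Pμ.map (fun ω => WithLp.toLp 2 (Y n ω)),
      Measure.isProbabilityMeasure_map (hYm n).aemeasurable⟩ with hν
  set ν0 : ProbabilityMeasure (EuclideanSpace ℝ (Fin k)) :=
    ⟨(Measure.pi fun _ : Fin k => gaussianReal 0 1).map (fun w => WithLp.toLp 2 (Cm.mulVec w)),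
      Measure.isProbabilityMeasure_map hm.measurable.aemeasurable⟩ with hν0
  have hconv : Tendsto ν atTop (𝓝 ν0) := by
    rw [ProbabilityMeasure.tendsto_iff_tendsto_charFun]
    intro t
    have e0 : charFun (ν0 : Measure (EuclideanSpace ℝ (Fin k))) t
        = Complex.exp (-((∫ x, ∫ y, comb E t.ofLp x y ^ 2 ∂(P x) ∂π : ℝ) : ℂ) / 2) := by
      have := gauss_charFun Cm t
      simp_rw [hCm] at this
      rw [comb_var h.piV hC hE t.ofLp]
      exact this
    rw [e0]
    have h1 := clt_one h (C := k * ∑ i, t i ^ 2 * Cc)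
      (mul_nonneg (Nat.cast_nonneg _) (Finset.sum_nonneg fun i _ => mul_nonneg (sq_nonneg _) hC))
      (comb_incr hE t.ofLp)
    have en : ∀ n, charFun (ν n : Measure (EuclideanSpace ℝ (Fin k))) t
        = ∫ ω, Complex.exp ((∑ i, t i * Y n ω i : ℝ) * Complex.I) ∂Pμ := by
      intro n
      have : (ν n : Measure (EuclideanSpace ℝ (Fin k))) = Pμ.map (fun ω => WithLp.toLp 2 (Y n ω)) := rfl
      rw [this, charFun_apply, integral_map (hYm n).aemeasurable
        (Measurable.aestronglyMeasurable (by fun_prop))]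
      simp [PiLp.inner_apply]
    simp_rw [en]
    have hlim2 : Tendsto (fun n => ∑ i, |t i| * ∫ ω, |r n ω i| ∂Pμ) atTop (𝓝 0) := by
      have := tendsto_finsetSum (Finset.univ : Finset (Fin k)) fun i _ => (hr i).const_mul |t i|
      simpa using this
    have hdiff : Tendsto (fun n => ∫ ω, Complex.exp ((∑ i, t i * Y n ω i : ℝ) * Complex.I) ∂Pμ
        - ∫ ω, pexp (comb E t.ofLp) (√(n : ℝ))⁻¹ n ω ∂Pμ) atTop (𝓝 0) := by
      refine squeeze_zero_norm' ?_ hlim2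
      filter_upwards [eventually_ge_atTop 1] with n hn
      have m1 : Measurable (fun ω => ∑ i, t i * Y n ω i) :=
        Finset.measurable_sum _ fun i _ => ((measurable_pi_apply i).comp (hY n)).const_mul _
      have i1 : Integrable (fun ω => Complex.exp ((∑ i, t i * Y n ω i : ℝ) * Complex.I)) Pμ := by
        refine (integrable_const (1 : ℝ)).mono' ?_ (ae_of_all _ fun ω => ?_)
        · have := cexp_measurable m1 1
          simp only [one_mul] at this
          exact this.aestronglyMeasurable
        · exact (Complex.norm_exp_ofReal_mul_I _).le
      have i2 : Integrable (pexp (comb E t.ofLp) (√(n : ℝ))⁻¹ n) Pμ :=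
        (integrable_const (1 : ℝ)).mono'
        (pexp_meas (comb_incr hE t.ofLp).meas _ n).aestronglyMeasurable
        (ae_of_all _ fun ω => (pexp_norm _ _ _ _).le)
      rw [← integral_sub i1 i2]
      have i3 : ∀ i ∈ (Finset.univ : Finset (Fin k)), Integrable (fun ω => |t i| * |r n ω i|) Pμ :=
        fun i _ => (hri n i).abs.const_mul _
      have e3 : ∑ i, |t i| * ∫ ω, |r n ω i| ∂Pμ = ∫ ω, ∑ i, |t i| * |r n ω i| ∂Pμ := by
        rw [integral_finsetSum _ i3]
        simp_rw [integral_const_mul]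
      rw [e3]
      refine norm_integral_le_of_norm_le (integrable_finsetSum _ i3) (ae_of_all _ fun ω => ?_)
      refine (exp_lip _ _).trans ?_
      have : ∑ i, t i * Y n ω i - (√(n : ℝ))⁻¹ * psum (comb E t.ofLp) n ω = ∑ i, t i * r n ω i := by
        rw [psum_comb, Finset.mul_sum, ← Finset.sum_sub_distrib]
        refine Finset.sum_congr rfl fun i _ => ?_
        rw [hYr n hn]; ring
      rw [this]
      refine (Finset.abs_sum_le_sum_abs _ _).trans (le_of_eq ?_)
      simp_rw [abs_mul]
    have := hdiff.add h1
    simpa using this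
  have hfin := ProbabilityMeasure.tendsto_iff_forall_integral_tendsto.1 hconv
    (φ.compContinuous ⟨_, hof⟩)
  have ea : ∀ n, ∫ z, φ.compContinuous ⟨_, hof⟩ z ∂(ν n : Measure (EuclideanSpace ℝ (Fin k)))
      = ∫ ω, φ (Y n ω) ∂Pμ := by
    intro n
    have : (ν n : Measure (EuclideanSpace ℝ (Fin k))) = Pμ.map (fun ω => WithLp.toLp 2 (Y n ω)) := rfl
    rw [this, integral_map (hYm n).aemeasurable (by
      exact (BoundedContinuousFunction.continuous _).measurable.aestronglyMeasurable)]
    rfl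
  have eb : ∫ z, φ.compContinuous ⟨_, hof⟩ z ∂(ν0 : Measure (EuclideanSpace ℝ (Fin k)))
      = ∫ w, φ (Cm.mulVec w) ∂(Measure.pi fun _ : Fin k => gaussianReal 0 1) := by
    have : (ν0 : Measure (EuclideanSpace ℝ (Fin k)))
      = (Measure.pi fun _ : Fin k => gaussianReal 0 1).map (fun w => WithLp.toLp 2 (Cm.mulVec w)) := rfl
    rw [this, integral_map hm.measurable.aemeasurable (by
      exact (BoundedContinuousFunction.continuous _).measurable.aestronglyMeasurable)]
    rfl
  simp_rw [ea, eb] at hfin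
  exact hfin

end vec

section final

theorem incr_mean_zero {X : Type*} [MeasurableSpace X] (d : ℕ)
    (θ₀ : Fin d → ℝ) (ε : ℝ) (hε : 0 < ε)
    (P : (Fin d → ℝ) → Kernel X X)
    (hPmarkov : ∀ θ ∈ Metric.ball θ₀ ε, IsMarkovKernel (P θ))
    [IsMarkovKernel (P θ₀)]
    (p : (Fin d → ℝ) → X → X → ℝ)
    (hp_meas : ∀ θ ∈ Metric.ball θ₀ ε, Measurable (Function.uncurry (p θ)))
    (hp_nonneg : ∀ θ ∈ Metric.ball θ₀ ε, ∀ x y, 0 ≤ p θ x y)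
    (hp_density : ∀ θ ∈ Metric.ball θ₀ ε, ∀ x,
      (P θ) x = ((P θ₀) x).withDensity fun y => ENNReal.ofReal (p θ x y))
    (dp : Fin d → X → X → ℝ)
    (V : X → ℝ) (hV1 : ∀ x, 1 ≤ V x)
    (hPi_diff : ∀ i : Fin d, ∀ δ' : ℝ, 0 < δ' → ∃ η > 0, ∀ h : ℝ, h ≠ 0 → |h| < η →
      ∀ x, ∀ g : X → ℝ, Measurable g → (∀ y, |g y| ≤ V y) →
        |∫ y, g y * ((p (θ₀ + h • (Pi.single i 1 : Fin d → ℝ)) x y - 1) / h - dp i x y) ∂((P θ₀) x)|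
          ≤ δ' * V x)
    (hdpInt : ∀ i x, Integrable (dp i x) (P θ₀ x)) (i : Fin d) (x : X) :
    ∫ y, dp i x y ∂(P θ₀ x) = 0 := by
  have key : ∀ δ' : ℝ, 0 < δ' → |∫ y, dp i x y ∂(P θ₀ x)| ≤ δ' * V x := by
    intro δ' hδ'
    obtain ⟨η, hη, hh⟩ := hPi_diff i δ' hδ'
    set h : ℝ := min η ε / 2 with hhd
    have hmin : 0 < min η ε := lt_min hη hε
    have hpos : 0 < h := by positivity
    have hlt1 : h < η := by have := min_le_left η ε; linarith
    have hlt2 : h < ε := by have := min_le_right η ε; linarith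
    have h1 := hh h hpos.ne' (by rw [abs_of_pos hpos]; exact hlt1) x (fun _ => 1) measurable_const
      (fun y => by simpa using hV1 y)
    set θ := θ₀ + h • (Pi.single i 1 : Fin d → ℝ) with hθ
    have hθb : θ ∈ Metric.ball θ₀ ε := by
      rw [Metric.mem_ball, dist_eq_norm, hθ, add_sub_cancel_left, norm_smul, Pi.norm_single,
        norm_one, mul_one, Real.norm_of_nonneg hpos.le]
      exact hlt2
    have hpm : Measurable (p θ x) := (hp_meas θ hθb).comp (measurable_const.prodMk measurable_id)
    have hl1 : ∫⁻ y, ENNReal.ofReal (p θ x y) ∂(P θ₀ x) = 1 := by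
      have := hPmarkov θ hθb
      have h2 : (P θ) x Set.univ = 1 := measure_univ
      rw [hp_density θ hθb x, withDensity_apply _ MeasurableSet.univ] at h2
      simpa using h2
    have hpi : Integrable (p θ x) (P θ₀ x) := by
      refine (lintegral_ofReal_ne_top_iff_integrable hpm.aestronglyMeasurable
        (ae_of_all _ fun y => hp_nonneg θ hθb x y)).1 ?_
      rw [hl1]; simp
    have hp1 : ∫ y, p θ x y ∂(P θ₀ x) = 1 := by
      rw [integral_eq_lintegral_of_nonneg_ae (ae_of_all _ fun y => hp_nonneg θ hθb x y)
        hpm.aestronglyMeasurable, hl1]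
      simp
    simp only [one_mul] at h1
    have i1 : Integrable (fun y => p θ x y - 1) (P θ₀ x) := hpi.sub (integrable_const _)
    rw [integral_sub (i1.div_const h) (hdpInt i x), integral_div,
      integral_sub hpi (integrable_const _), hp1] at h1
    simpa using h1
  by_contra hne
  have hpos : 0 < |∫ y, dp i x y ∂(P θ₀ x)| := abs_pos.2 hne
  have hVp : 0 < V x := by linarith [hV1 x]
  have := key (|∫ y, dp i x y ∂(P θ₀ x)| / (2 * V x)) (by positivity)
  rw [div_mul_eq_mul_div, mul_div_mul_right _ _ hVp.ne'] at this
  linarith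

theorem int_of_lint {Y : Type*} [MeasurableSpace Y] {Q : Measure Y} {F : Y → ℝ}
    (hF : Measurable F) (h0 : ∀ y, 0 ≤ F y) {a : ℝ} (ha : 0 ≤ a)
    (h : ∫⁻ y, ENNReal.ofReal (F y) ∂Q ≤ ENNReal.ofReal a) :
    Integrable F Q ∧ ∫ y, F y ∂Q ≤ a := by
  refine ⟨(lintegral_ofReal_ne_top_iff_integrable hF.aestronglyMeasurable (ae_of_all _ h0)).1
    (ne_top_of_le_ne_top ENNReal.ofReal_ne_top h), ?_⟩
  rw [integral_eq_lintegral_of_nonneg_ae (ae_of_all _ h0) hF.aestronglyMeasurable]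
  exact ENNReal.toReal_le_of_le_ofReal ha h

/-- centered Poisson increment -/
def pinc {X : Type*} [MeasurableSpace X] (P : Kernel X X) (fhat : X → ℝ) (x y : X) : ℝ :=
  fhat y - TT P fhat x

theorem incr_mono {X : Type*} [MeasurableSpace X] {P : Kernel X X} {V : X → ℝ}
    {D : X → X → ℝ} {C C' : ℝ} (hD : Incr P V D C) (hV1 : ∀ x, 1 ≤ V x) (h : C ≤ C') :
    Incr P V D C' :=
  ⟨hD.meas, hD.sq, fun x => (hD.bd x).trans
    (mul_le_mul_of_nonneg_right h (by linarith [hV1 x])), hD.mean⟩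

theorem pinc_sq {X : Type*} [MeasurableSpace X] {P : Kernel X X} [IsMarkovKernel P] {fhat : X → ℝ}
    {x : X} (h1 : Integrable fhat (P x)) (h2 : Integrable (fun y => fhat y ^ 2) (P x)) :
    ∫ y, pinc P fhat x y ^ 2 ∂(P x) = ∫ y, fhat y ^ 2 ∂(P x) - (∫ y, fhat y ∂(P x)) ^ 2 := by
  unfold pinc
  set m := TT P fhat x with hm
  have hm' : ∫ y, fhat y ∂(P x) = m := rfl
  have e : ∀ y, (fhat y - m) ^ 2 = fhat y ^ 2 - 2 * m * fhat y + m ^ 2 := fun y => by ring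
  simp_rw [e]
  have i1 : Integrable (fun y => fhat y ^ 2 - 2 * m * fhat y) (P x) := h2.sub (h1.const_mul _)
  rw [integral_add i1 (integrable_const _), integral_sub h2 (h1.const_mul _), integral_const_mul, hm']
  simp
  ring

end final

/-- Proposition 3.2: under Assumption 1, the control-variate estimator
`(α_n − α(θ₀))·∇L_n(θ₀)` converges in distribution to `Z₀·(Z₁,…,Z_d)` where
`Z = (Z₀,…,Z_d)` is a centered Gaussian vector with covariance `Σ`. -/
theorem control_variate_clt {X : Type*} [MeasurableSpace X] (d : ℕ)
    (θ₀ : Fin d → ℝ) (ε : ℝ) (hε : 0 < ε)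
    (P : (Fin d → ℝ) → Kernel X X)
    (hPmarkov : ∀ θ ∈ Metric.ball θ₀ ε, IsMarkovKernel (P θ))
    [IsMarkovKernel (P θ₀)]
    -- densities with respect to `P θ₀`
    (p : (Fin d → ℝ) → X → X → ℝ)
    (hp_meas : ∀ θ ∈ Metric.ball θ₀ ε, Measurable (Function.uncurry (p θ)))
    (hp_nonneg : ∀ θ ∈ Metric.ball θ₀ ε, ∀ x y, 0 ≤ p θ x y)
    (hp_density : ∀ θ ∈ Metric.ball θ₀ ε, ∀ x,
      (P θ) x = ((P θ₀) x).withDensity fun y => ENNReal.ofReal (p θ x y))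
    (hp_one : ∀ x y, p θ₀ x y = 1)
    -- differentiability of the densities at `θ₀` with partial derivatives `dp i`
    (dp : Fin d → X → X → ℝ)
    (hdp_meas : ∀ i, Measurable (Function.uncurry (dp i)))
    (hdp : ∀ x y, HasFDerivAt (fun θ => p θ x y)
      (∑ i : Fin d, dp i x y • (ContinuousLinearMap.proj i : (Fin d → ℝ) →L[ℝ] ℝ)) θ₀)
    -- (i) ψ-irreducibility
    (ψ : Measure X) [SigmaFinite ψ] (hψ : ψ ≠ 0)
    (hirr : ∀ θ ∈ Metric.ball θ₀ ε, ∀ A : Set X, MeasurableSet A → 0 < ψ A →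
      ∀ x, ∃ n : ℕ, 0 < (kpow (P θ) n) x A)
    -- (ii) minorization on the small set `K`
    (K : Set X) (hK : MeasurableSet K) (δ : ℝ) (hδ : 0 < δ) (m : ℕ)
    (ν : Measure X) [IsProbabilityMeasure ν]
    (hminor : ∀ θ ∈ Metric.ball θ₀ ε, ∀ x ∈ K, ∀ A : Set X, MeasurableSet A →
      ENNReal.ofReal δ * ν A ≤ (kpow (P θ) m) x A)
    -- (iii) drift condition
    (V : X → ℝ) (hVmeas : Measurable V) (hV1 : ∀ x, 1 ≤ V x)
    (l b : ℝ) (hl0 : 0 < l) (hl1 : l < 1) (hb : 0 ≤ b)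
    (hdrift : ∀ θ ∈ Metric.ball θ₀ ε, ∀ x,
      ∫⁻ y, ENNReal.ofReal (V y) ∂((P θ) x)
        ≤ ENNReal.ofReal (l * V x + b * K.indicator (fun _ => 1) x))
    -- (iv) finiteness of `|||P^{(i)}(θ₀)|||_V` and differentiability in `V`-operator norm
    (hPi_bdd : ∀ i : Fin d, ∃ C : ℝ, ∀ x, ∀ g : X → ℝ, Measurable g → (∀ y, |g y| ≤ V y) →
      |∫ y, g y * dp i x y ∂((P θ₀) x)| ≤ C * V x)
    (hPi_diff : ∀ i : Fin d, ∀ δ' : ℝ, 0 < δ' → ∃ η > 0, ∀ h : ℝ, h ≠ 0 → |h| < η →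
      ∀ x, ∀ g : X → ℝ, Measurable g → (∀ y, |g y| ≤ V y) →
        |∫ y, g y * ((p (θ₀ + h • (Pi.single i 1 : Fin d → ℝ)) x y - 1) / h - dp i x y) ∂((P θ₀) x)|
          ≤ δ' * V x)
    -- (v) `sup_x g_{ii}(x)/V(x) < ∞`
    (hgV : ∀ i : Fin d, ∃ C : ℝ, ∀ x,
      ∫⁻ y, ENNReal.ofReal ((dp i x y) ^ 2) ∂((P θ₀) x) ≤ ENNReal.ofReal (C * V x))
    -- (vi) `sup_x |f(x)|/√V(x) < ∞`
    (f : X → ℝ) (hf_meas : Measurable f)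
    (hf_bdd : ∃ κ : ℝ, ∀ x, |f x| ≤ κ * Real.sqrt (V x))
    -- invariant probability measure with `πV < ∞`
    (π : Measure X) [IsProbabilityMeasure π]
    (hπ_inv : π.bind (fun x => (P θ₀) x) = π)
    (hπV : ∫⁻ x, ENNReal.ofReal (V x) ∂π < ⊤)
    (α : ℝ) (hα : α = ∫ x, f x ∂π)
    -- solution of Poisson's equation
    (fhat : X → ℝ) (hfhat_meas : Measurable fhat)
    (c : ℝ) (hc : 0 ≤ c) (hfhat_bdd : ∀ x, |fhat x| ≤ c * Real.sqrt (V x))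
    (hPoisson : ∀ x, fhat x - ∫ y, fhat y ∂((P θ₀) x) = f x - α)
    -- the (d+1)×(d+1) covariance matrix
    (Sig : Matrix (Fin (d + 1)) (Fin (d + 1)) ℝ)
    (hSig00 : Sig 0 0 = ∫ x, (∫ y, (fhat y) ^ 2 ∂((P θ₀) x)
      - (∫ y, fhat y ∂((P θ₀) x)) ^ 2) ∂π)
    (hSig0i : ∀ i : Fin d, Sig 0 i.succ = ∫ x, ∫ y, fhat y * dp i x y ∂((P θ₀) x) ∂π)
    (hSigi0 : ∀ i : Fin d, Sig i.succ 0 = ∫ x, ∫ y, fhat y * dp i x y ∂((P θ₀) x) ∂π)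
    (hSigij : ∀ i j : Fin d,
      Sig i.succ j.succ = ∫ x, ∫ y, dp i x y * dp j x y ∂((P θ₀) x) ∂π)
    -- the chain with initial distribution `μ`
    (μ : Measure X) [IsProbabilityMeasure μ]
    (hμV : ∫⁻ x, ENNReal.ofReal (V x) ∂μ < ⊤)
    (Pμ : Measure (ℕ → X)) (hPμ : IsMarkovChainLaw μ (P θ₀) Pμ)
    (A : ℕ → (ℕ → X) → ℝ)
    (hA : ∀ n ω, A n ω = (1 / (n : ℝ)) * ∑ j ∈ Finset.range n, f (ω j))
    (M : ℕ → (ℕ → X) → Fin d → ℝ)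
    (hM : ∀ n ω i, M n ω i = ∑ j ∈ Finset.range n, dp i (ω j) (ω (j + 1))) :
    ∀ C : Matrix (Fin (d + 1)) (Fin (d + 1)) ℝ, C * C.transpose = Sig →
      ∀ φ : BoundedContinuousFunction (Fin d → ℝ) ℝ,
        Tendsto (fun n : ℕ => ∫ ω, φ (fun i => (A n ω - α) * M n ω i) ∂Pμ)
          atTop
          (nhds (∫ w, φ (fun i : Fin d => (C.mulVec w) 0 * (C.mulVec w) i.succ)
            ∂(Measure.pi fun _ : Fin (d + 1) => gaussianReal 0 1))) := by
  intro C hCS φ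
  have hθ0 : θ₀ ∈ Metric.ball θ₀ ε := Metric.mem_ball_self hε
  have hV0 : ∀ x, 0 ≤ V x := fun x => by linarith [hV1 x]
  have hind : ∀ x, 0 ≤ K.indicator (fun _ => (1 : ℝ)) x := fun x =>
    Set.indicator_nonneg (fun _ _ => zero_le_one) x
  have hPprob : IsProbabilityMeasure Pμ := hPμ.1
  have hdr : ∀ x, Integrable V (P θ₀ x) ∧
      ∫ y, V y ∂(P θ₀ x) ≤ l * V x + b * K.indicator (fun _ => 1) x := fun x =>
    int_of_lint hVmeas hV0 (add_nonneg (mul_nonneg hl0.le (hV0 x)) (mul_nonneg hb (hind x)))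
      (hdrift θ₀ hθ0 x)
  have hdc : DC (P θ₀) V K l (b + 1) := by
    refine ⟨hVmeas, hV1, hl0, hl1, by linarith, hK, fun x => (hdr x).1, fun x => ?_⟩
    have h1 := (hdr x).2
    have h2 := hind x
    linarith
  have hpiV : Integrable V π := (lintegral_ofReal_ne_top_iff_integrable
    hVmeas.aestronglyMeasurable (ae_of_all _ hV0)).1 hπV.ne
  have hmuV : Integrable V μ := (lintegral_ofReal_ne_top_iff_integrable
    hVmeas.aestronglyMeasurable (ae_of_all _ hV0)).1 hμV.ne
  have herg : Erg (P θ₀) V K l (b + 1) π μ Pμ := by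
    refine ⟨hdc, fun u hu hu0 e he => ?_, hpiV, hPμ, ?_⟩
    · exact approx_cob hdc hδ (fun x hx A hA => hminor θ₀ hθ0 x hx A hA) hπ_inv hpiV hu hu0 e he
    · have h1 := hmuV
      rw [← hPμ.2.1] at h1
      exact (integrable_map_measure hVmeas.aestronglyMeasurable
        (measurable_pi_apply 0).aemeasurable).1 h1
  -- increments coming from the densities
  choose Cg hCg using hgV
  have hdpm : ∀ i x, Measurable (dp i x) := fun i x =>
    (hdp_meas i).comp (measurable_const.prodMk measurable_id)
  have hdpsq : ∀ i x, Integrable (fun y => dp i x y ^ 2) (P θ₀ x) ∧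
      ∫ y, dp i x y ^ 2 ∂(P θ₀ x) ≤ |Cg i| * V x := fun i x => by
    refine int_of_lint ((hdpm i x).pow_const 2) (fun y => sq_nonneg _)
      (mul_nonneg (abs_nonneg _) (hV0 x)) ((hCg i x).trans (ENNReal.ofReal_le_ofReal ?_))
    exact mul_le_mul_of_nonneg_right (le_abs_self _) (hV0 x)
  have hdpL : ∀ i x, MemLp (dp i x) 2 (P θ₀ x) := fun i x =>
    (memLp_two_iff_integrable_sq (hdpm i x).aestronglyMeasurable).2 (hdpsq i x).1
  have hdpi : ∀ i x, Integrable (dp i x) (P θ₀ x) := fun i x =>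
    (hdpL i x).integrable (by norm_num)
  have hdp0 : ∀ i x, ∫ y, dp i x y ∂(P θ₀ x) = 0 :=
    incr_mean_zero d θ₀ ε hε P hPmarkov p hp_meas hp_nonneg hp_density dp V hV1 hPi_diff hdpi
  -- the Poisson increment
  have hf2 : ∀ x, fhat x ^ 2 ≤ c ^ 2 * V x := fun x => by
    rw [← sq_abs]
    calc |fhat x| ^ 2 ≤ (c * Real.sqrt (V x)) ^ 2 := by
          have := hfhat_bdd x
          gcongr
      _ = c ^ 2 * V x := by rw [mul_pow, Real.sq_sqrt (hV0 x)]
  have hfabs : ∀ x, |fhat x| ≤ c * V x := fun x => by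
    refine (hfhat_bdd x).trans (mul_le_mul_of_nonneg_left ?_ hc)
    rw [Real.sqrt_le_left (hV0 x)]
    nlinarith [hV1 x]
  have hfVB : VB V fhat := ⟨hfhat_meas, c, hc, hfabs⟩
  have hf2VB : VB V (fun x => fhat x ^ 2) := ⟨hfhat_meas.pow_const 2, c ^ 2, sq_nonneg c, fun x => by
    rw [abs_of_nonneg (sq_nonneg _)]; exact hf2 x⟩
  have hfi : ∀ x, Integrable fhat (P θ₀ x) := hfVB.int hdc
  have hf2i : ∀ x, Integrable (fun y => fhat y ^ 2) (P θ₀ x) := hf2VB.int hdc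
  have hfL : ∀ x, MemLp fhat 2 (P θ₀ x) := fun x =>
    (memLp_two_iff_integrable_sq hfhat_meas.aestronglyMeasurable).2 (hf2i x)
  have hTTm : Measurable (TT (P θ₀) fhat) := (hfVB.TT hdc).1
  have hE0 : Incr (P θ₀) V (pinc (P θ₀) fhat) (c ^ 2 * (l + (b + 1))) := by
    refine ⟨?_, fun x => ?_, fun x => ?_, fun x => ?_⟩
    · exact (hfhat_meas.comp measurable_snd).sub (hTTm.comp measurable_fst)
    · exact ((hfL x).sub (memLp_const (TT (P θ₀) fhat x))).integrable_sq
    · rw [pinc_sq (hfi x) (hf2i x)]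
      have h1 : ∫ y, fhat y ^ 2 ∂(P θ₀ x) ≤ ∫ y, c ^ 2 * V y ∂(P θ₀ x) :=
        integral_mono (hf2i x) ((hdc.int x).const_mul _) hf2
      rw [integral_const_mul] at h1
      have h2 := mul_le_mul_of_nonneg_left (hdc.drift'' x) (sq_nonneg c)
      nlinarith [sq_nonneg (∫ y, fhat y ∂(P θ₀ x))]
    · unfold pinc
      rw [integral_sub (hfi x) (integrable_const _)]
      simp [TT]
  set Cc : ℝ := c ^ 2 * (l + (b + 1)) + ∑ i, |Cg i| with hCc
  have hsum0 : 0 ≤ ∑ i, |Cg i| := Finset.sum_nonneg fun i _ => abs_nonneg _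
  have hlb : 0 ≤ c ^ 2 * (l + (b + 1)) := by positivity
  have hCc0 : 0 ≤ Cc := add_nonneg hlb hsum0
  set E : Fin (d + 1) → X → X → ℝ := Fin.cons (pinc (P θ₀) fhat) dp with hEd
  have hEz : E 0 = pinc (P θ₀) fhat := rfl
  have hEs : ∀ i : Fin d, E i.succ = dp i := fun i => rfl
  have hE : ∀ i, Incr (P θ₀) V (E i) Cc := by
    intro i
    refine Fin.cases ?_ (fun i => ?_) i
    · rw [hEz]
      exact incr_mono hE0 hV1 (by linarith)
    · rw [hEs]
      refine incr_mono (C := |Cg i|) ⟨hdp_meas i, fun x => (hdpsq i x).1, fun x => (hdpsq i x).2,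
        hdp0 i⟩ hV1 ?_
      have := Finset.single_le_sum (f := fun i => |Cg i|) (fun i _ => abs_nonneg _)
        (Finset.mem_univ i)
      linarith
  have hcr : ∀ i x, ∫ y, pinc (P θ₀) fhat x y * dp i x y ∂(P θ₀ x)
      = ∫ y, fhat y * dp i x y ∂(P θ₀ x) := by
    intro i x
    unfold pinc
    simp_rw [sub_mul]
    have i1 : Integrable (fun y => fhat y * dp i x y) (P θ₀ x) := (hfL x).integrable_mul (hdpL i x)
    rw [integral_sub i1 ((hdpi i x).const_mul _),
      integral_const_mul, hdp0, mul_zero, sub_zero]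
  have hcr' : ∀ i x, ∫ y, dp i x y * pinc (P θ₀) fhat x y ∂(P θ₀ x)
      = ∫ y, fhat y * dp i x y ∂(P θ₀ x) := by
    intro i x
    rw [← hcr]
    simp_rw [mul_comm]
  have hSigE : ∀ i j, (C * C.transpose) i j = ∫ x, ∫ y, E i x y * E j x y ∂(P θ₀ x) ∂π := by
    intro i j
    rw [hCS]
    refine Fin.cases ?_ (fun i => ?_) i
    · refine Fin.cases ?_ (fun j => ?_) j
      · rw [hEz, hSig00]
        refine integral_congr_ae (ae_of_all _ fun x => ?_)
        simp only
        rw [← pinc_sq (hfi x) (hf2i x)]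
        simp_rw [sq]
      · rw [hEz, hEs, hSig0i]
        simp_rw [hcr]
    · refine Fin.cases ?_ (fun j => ?_) j
      · rw [hEz, hEs, hSigi0]
        simp_rw [hcr']
      · rw [hEs, hEs, hSigij]
  -- the random vectors
  set Y : ℕ → (ℕ → X) → Fin (d + 1) → ℝ := fun n ω =>
    Fin.cons (√(n : ℝ) * (A n ω - α)) (fun i => (√(n : ℝ))⁻¹ * M n ω i) with hYd
  set r : ℕ → (ℕ → X) → Fin (d + 1) → ℝ := fun n ω =>
    Fin.cons ((√(n : ℝ))⁻¹ * (fhat (ω 0) - fhat (ω n))) (fun _ => 0) with hrd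
  have hYz : ∀ n ω, Y n ω 0 = √(n : ℝ) * (A n ω - α) := fun n ω => rfl
  have hYs : ∀ n ω (i : Fin d), Y n ω i.succ = (√(n : ℝ))⁻¹ * M n ω i := fun n ω i => rfl
  have hrz : ∀ n ω, r n ω 0 = (√(n : ℝ))⁻¹ * (fhat (ω 0) - fhat (ω n)) := fun n ω => rfl
  have hrs : ∀ n ω (i : Fin d), r n ω i.succ = 0 := fun n ω i => rfl
  have hMps : ∀ n ω i, M n ω i = psum (dp i) n ω := fun n ω i => hM n ω i
  have hYm : ∀ n, Measurable (Y n) := by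
    intro n
    refine measurable_pi_lambda _ fun i => ?_
    refine Fin.cases ?_ (fun i => ?_) i
    · simp_rw [hYz, hA]
      refine Measurable.const_mul (Measurable.sub_const (Measurable.const_mul ?_ _) _) _
      exact Finset.measurable_sum _ fun j _ => hf_meas.comp (measurable_pi_apply j)
    · simp_rw [hYs, hMps]
      exact (psum_meas (hdp_meas i) n).const_mul _
  have hYr : ∀ n, 1 ≤ n → ∀ ω i, Y n ω i = (√(n : ℝ))⁻¹ * psum (E i) n ω + r n ω i := by
    intro n hn ω i
    have hnpos : (0 : ℝ) < n := by exact_mod_cast hn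
    refine Fin.cases ?_ (fun i => ?_) i
    · rw [hYz, hrz, hEz, ← mul_add]
      have e1 : ∑ j ∈ Finset.range n, f (ω j) - n * α
          = psum (pinc (P θ₀) fhat) n ω + (fhat (ω 0) - fhat (ω n)) := by
        rw [← Finset.sum_range_sub' (fun j => fhat (ω j)) n]
        unfold psum pinc TT
        rw [← Finset.sum_add_distrib]
        have : (n : ℝ) * α = ∑ _j ∈ Finset.range n, α := by simp
        rw [this, ← Finset.sum_sub_distrib]
        refine Finset.sum_congr rfl fun j _ => ?_
        rw [← hPoisson]; ring
      rw [← e1, hA]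
      have hs : √(n : ℝ) ≠ 0 := (Real.sqrt_pos.2 hnpos).ne'
      have hss : √(n : ℝ) * √(n : ℝ) = n := Real.mul_self_sqrt hnpos.le
      have hinv : √(n : ℝ) = (√(n : ℝ))⁻¹ * n := by
        field_simp
        rw [sq]; exact hss
      have e2 : √(n : ℝ) * (1 / (n : ℝ) * ∑ j ∈ Finset.range n, f (ω j) - α)
          = (√(n : ℝ))⁻¹ * n * (1 / (n : ℝ) * ∑ j ∈ Finset.range n, f (ω j) - α) := by
        rw [← hinv]
      rw [e2, mul_assoc]
      congr 1
      field_simp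
    · rw [hYs, hrs, hEs, hMps, add_zero]
  have hri : ∀ n i, Integrable (fun ω => r n ω i) Pμ := by
    intro n i
    refine Fin.cases ?_ (fun i => ?_) i
    · simp_rw [hrz]
      exact ((herg.int hfVB 0).sub (herg.int hfVB n)).const_mul _
    · simp_rw [hrs]
      exact integrable_const _
  obtain ⟨C0, hC00, hC0⟩ := herg.bdd
  have hr : ∀ i, Tendsto (fun n => ∫ ω, |r n ω i| ∂Pμ) atTop (𝓝 0) := by
    intro i
    refine Fin.cases ?_ (fun i => ?_) i
    · have hl : Tendsto (fun n : ℕ => (√(n : ℝ))⁻¹) atTop (𝓝 0) :=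
        tendsto_inv_atTop_zero.comp (Real.tendsto_sqrt_atTop.comp tendsto_natCast_atTop_atTop)
      have hl2 := hl.mul_const (2 * (c * C0))
      rw [zero_mul] at hl2
      refine squeeze_zero (fun n => integral_nonneg fun ω => abs_nonneg _) (fun n => ?_) hl2
      simp_rw [hrz, abs_mul]
      rw [integral_const_mul, abs_of_nonneg (by positivity : 0 ≤ (√(n : ℝ))⁻¹)]
      refine mul_le_mul_of_nonneg_left ?_ (by positivity)
      have i0 : Integrable (fun ω : ℕ → X => |fhat (ω 0)|) Pμ := (herg.int hfVB 0).abs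
      have i1 : Integrable (fun ω : ℕ → X => |fhat (ω n)|) Pμ := (herg.int hfVB n).abs
      have h1 : ∫ ω, |fhat (ω 0) - fhat (ω n)| ∂Pμ ≤ ∫ ω, (|fhat (ω 0)| + |fhat (ω n)|) ∂Pμ :=
        integral_mono ((herg.int hfVB 0).sub (herg.int hfVB n)).abs (i0.add i1) fun ω => abs_sub _ _
      rw [integral_add i0 i1] at h1
      have hb' : ∀ x, |(|fhat x|)| ≤ c * V x := fun x => by rw [abs_abs]; exact hfabs x
      have h2 := (le_abs_self _).trans (herg.abs_le hC0 hc hb' 0)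
      have h3 := (le_abs_self _).trans (herg.abs_le hC0 hc hb' n)
      linarith
    · simp_rw [hrs]
      simp
  have hcont : Continuous (fun z : Fin (d + 1) → ℝ => fun i : Fin d => z 0 * z i.succ) := by
    fun_prop
  have hmain := vec_clt herg hCc0 hE C hSigE hYm hYr hri hr (φ.compContinuous ⟨_, hcont⟩)
  refine hmain.congr' ?_
  filter_upwards [eventually_ge_atTop 1] with n hn
  refine integral_congr_ae (ae_of_all _ fun ω => ?_)
  simp only [BoundedContinuousFunction.compContinuous_apply, ContinuousMap.coe_mk]
  congr 1
  ext i
  have hnpos : (0 : ℝ) < n := by exact_mod_cast hn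
  have hs : √(n : ℝ) ≠ 0 := (Real.sqrt_pos.2 hnpos).ne'
  rw [hYz, hYs]
  field_simp

end
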